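/- For every constant A ≥ 1 there exist constants c > 0, C > 0 and an integer N₀ (all depending only on A) such that the following holds. Let S ≥ 2 and n ≥ N₀ be integers with S ≤ n^A, and let Q ∈ M_S satisfy Σ_{j=1}^S min{q_j, √(q_j/(n ln n))} ≥ C·( √(ln n / n) + √S·(ln n)/n ). Then, in the Poisson sampling model with sample size n, inf_{L̂} sup_{P ∈ M_S} E_P (L̂(X) − L_1(P,Q))² ≥ c·( Σ_{j=1}^S min{q_j, √(q_j/(n ln n))} )², where the infimum is over all estimators L̂ : ℕ^S → ℝ. -/

import Mathlib

open scoped BigOperators ENNReal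

/-- The Poisson(lam) probability mass function on the nonnegative integers. -/
noncomputable def poissonPMF (lam : ℝ) (k : ℕ) : ℝ :=
  Real.exp (-lam) * lam ^ k / (Nat.factorial k)

/-- `P` is a probability vector on `{1,…,S}` (an element of `M_S`). -/
def IsDist {S : ℕ} (p : Fin S → ℝ) : Prop :=
  (∀ i, 0 ≤ p i) ∧ ∑ i, p i = 1

/-- Joint pmf of `S` independent coordinates `X_i ~ Poisson(n p_i)` (Poisson sampling model). -/
noncomputable def prodPMF {S : ℕ} (n : ℕ) (p : Fin S → ℝ) (x : Fin S → ℕ) : ℝ :=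
  ∏ i, poissonPMF (n * p i) (x i)

/-- The `L₁` distance between two vectors. -/
noncomputable def L1dist {S : ℕ} (p q : Fin S → ℝ) : ℝ :=
  ∑ i, |p i - q i|

/-- The mean squared error `E_P (est(X) - L)²` in the Poisson sampling model, valued in `ℝ≥0∞`. -/
noncomputable def risk {S : ℕ} (n : ℕ) (p : Fin S → ℝ) (L : ℝ) (est : (Fin S → ℕ) → ℝ) : ℝ≥0∞ :=
  ∑' x : Fin S → ℕ, ENNReal.ofReal (prodPMF n p x * (est x - L) ^ 2)

/-!
Perturb each coordinate of `q` at random, with one of two priors that share their first `m ≍ log n`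
moments, so that the Poisson mixtures they induce are nearly indistinguishable, while the mean
absolute perturbations differ by about `min q √(q / (n log n))`. Such pairs come from divided
differences at Chebyshev nodes together with two points between neighbouring nodes: these annihilate
all low degree polynomials but not an absolute value with its kink at one of the two added points.
Because the perturbations have mean zero, their total is small with high probability; it is removed
in proportion to `q`, so that the perturbed vector is again a probability vector and `n` is
unchanged. Replacing the prior of one coordinate at a time shows that the two product mixtures are
close in total variation. Since the `L₁` distance to `q` concentrates around separated means under
the two product priors, no estimator has small risk under both.
-/

section Moments

variable {ι : Type*} [Fintype ι] {v z : ι → ℝ} {m : ℕ}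

/-- The signed weights `v` at the points `z` annihilate all monomials of degree less than `m`. -/
def MomentsVanish (v z : ι → ℝ) (m : ℕ) : Prop :=
  ∀ k < m, ∑ i, v i * z i ^ k = 0

lemma MomentsVanish.mono (h : MomentsVanish v z m) {k : ℕ} (hk : k ≤ m) : MomentsVanish v z k :=
  fun l hl => h l (hl.trans_le hk)

lemma MomentsVanish.const_mul (h : MomentsVanish v z m) (c : ℝ) :
    MomentsVanish (fun i => c * v i) z m := fun k hk => by
  simp only [mul_assoc, ← Finset.mul_sum, h k hk, mul_zero]

lemma MomentsVanish.affine (h : MomentsVanish v z m) (α β : ℝ) :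
    MomentsVanish v (fun i => α * z i + β) m := fun k hk => by
  simp only [add_pow, mul_pow, Finset.mul_sum]
  rw [Finset.sum_comm]
  refine Finset.sum_eq_zero fun j hj => ?_
  have hjm : j < m := by grind
  calc ∑ i, v i * (α ^ j * z i ^ j * β ^ (k - j) * (k.choose j : ℝ))
      = ∑ i, α ^ j * β ^ (k - j) * (k.choose j : ℝ) * (v i * z i ^ j) :=
        Finset.sum_congr rfl fun i _ => by ring
    _ = 0 := by rw [← Finset.mul_sum, h j hjm, mul_zero]

/-- The points `t` together with one further point `p`, placed at `none`. -/
def adjoinPoint (p : ℝ) (t : ι → ℝ) : Option ι → ℝ := fun o => o.elim p t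

/-- The functional `f ↦ ∑ i, v i * (f (t i) - f p) / (t i - p)`, written as signed weights on
`adjoinPoint p t`. -/
noncomputable def divDiffWeight (v t : ι → ℝ) (p : ℝ) : Option ι → ℝ :=
  fun o => o.elim (∑ i, v i / (p - t i)) fun i => v i / (t i - p)

lemma sum_divDiffWeight_mul (v t : ι → ℝ) (p : ℝ) (f : ℝ → ℝ) :
    ∑ o, divDiffWeight v t p o * f (adjoinPoint p t o)
      = ∑ i, v i * ((f (t i) - f p) / (t i - p)) := by
  simp only [Fintype.sum_option, divDiffWeight, adjoinPoint, Option.elim, Finset.sum_mul,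
    ← Finset.sum_add_distrib]
  refine Finset.sum_congr rfl fun i _ => ?_
  rw [← neg_sub (t i) p, div_neg]
  ring

lemma MomentsVanish.divDiff {t : ι → ℝ} (h : MomentsVanish v t m) {p : ℝ} (hp : ∀ i, t i ≠ p) :
    MomentsVanish (divDiffWeight v t p) (adjoinPoint p t) (m + 1) := fun k hk => by
  have quotient (i : ι) : (t i ^ k - p ^ k) / (t i - p)
      = ∑ j ∈ Finset.range k, t i ^ j * p ^ (k - 1 - j) := by
    rw [← geom_sum₂_mul, mul_div_cancel_right₀ _ (sub_ne_zero.2 (hp i))]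
  rw [sum_divDiffWeight_mul v t p (· ^ k)]
  simp only [quotient, Finset.mul_sum]
  rw [Finset.sum_comm]
  refine Finset.sum_eq_zero fun j hj => ?_
  simp only [← mul_assoc, ← Finset.sum_mul]
  rw [h j (by grind), zero_mul]

end Moments

section AlternatingSums

/-- The alternating sum `f r - f (r - 1) + ⋯ ± f 1 ∓ f 0 / 2`. -/
noncomputable def altSum (f : ℕ → ℝ) : ℕ → ℝ
  | 0 => f 0 / 2
  | r + 1 => f (r + 1) - altSum f r

lemma altSum_mem_Icc {f : ℕ → ℝ} {r : ℕ} (h0 : 0 ≤ f 0) (hf : MonotoneOn f (Set.Iic r)) :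
    altSum f r ∈ Set.Icc 0 (f r) := by
  induction r with
  | zero => constructor <;> simp only [altSum] <;> linarith
  | succ r ih =>
    obtain ⟨hnonneg, hle⟩ := ih (hf.mono (Set.Iic_subset_Iic.2 r.le_succ))
    have hstep : f r ≤ f (r + 1) := hf (Set.mem_Iic.2 r.le_succ) Set.self_mem_Iic r.le_succ
    constructor <;> simp only [altSum] <;> linarith

lemma sub_le_altSum_succ {f : ℕ → ℝ} {r : ℕ} (h0 : 0 ≤ f 0) (hf : MonotoneOn f (Set.Iic r)) :
    f (r + 1) - f r ≤ altSum f (r + 1) :=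
  sub_le_sub_left (altSum_mem_Icc h0 hf).2 _

lemma altSum_cos_mul (θ : ℝ) (N : ℕ) :
    altSum (fun i => Real.cos (i * θ)) N * (2 * Real.cos (θ / 2))
      = Real.cos ((N + 1 / 2) * θ) := by
  induction N with
  | zero => simp only [altSum]; push_cast; ring_nf; simp
  | succ N ih =>
    have hadd : Real.cos (((N + 1 : ℕ) + 1 / 2) * θ)
        = Real.cos ((N + 1 : ℕ) * θ) * Real.cos (θ / 2)
          - Real.sin ((N + 1 : ℕ) * θ) * Real.sin (θ / 2) := by
      rw [← Real.cos_add]; ring_nf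
    have hsub : Real.cos ((N + 1 / 2) * θ)
        = Real.cos ((N + 1 : ℕ) * θ) * Real.cos (θ / 2)
          + Real.sin ((N + 1 : ℕ) * θ) * Real.sin (θ / 2) := by
      rw [← Real.cos_sub]; push_cast; ring_nf
    rw [altSum, sub_mul, ih, hadd, hsub]
    ring

/-- Signs with halved endpoints: up to a scalar, the weights of the divided difference at the
`m + 1` extremal points of the Chebyshev polynomial of degree `m`. -/
noncomputable def chebWeight (m i : ℕ) : ℝ :=
  (-1) ^ i * (if i = 0 ∨ i = m then 1 / 2 else 1)

lemma abs_chebWeight_le_one (m i : ℕ) : |chebWeight m i| ≤ 1 := by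
  rw [chebWeight, abs_mul, abs_neg_one_pow, one_mul]
  split_ifs <;> norm_num

lemma chebWeight_sub {m i : ℕ} (hi : i ≤ m) :
    chebWeight m (m - i) = (-1) ^ m * chebWeight m i := by
  have hcases : (m - i = 0 ∨ m - i = m) ↔ (i = 0 ∨ i = m) := by omega
  obtain ⟨j, rfl⟩ := Nat.exists_eq_add_of_le hi
  simp only [chebWeight, hcases, ← mul_assoc, ← pow_add]
  congr 1
  rw [show i + j + i = i + j - i + 2 * i by omega, pow_add, pow_mul, neg_one_sq, one_pow, mul_one]

lemma sum_range_chebWeight_mul (f : ℕ → ℝ) {m r : ℕ} (hr : r < m) :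
    ∑ i ∈ Finset.range (r + 1), chebWeight m i * f i = (-1) ^ r * altSum f r := by
  induction r with
  | zero =>
    rw [zero_add, Finset.sum_range_one, chebWeight, if_pos (Or.inl rfl), altSum]
    ring
  | succ r ih =>
    have hinner : chebWeight m (r + 1) = (-1) ^ (r + 1) := by
      rw [chebWeight, if_neg (by omega), mul_one]
    rw [Finset.sum_range_succ, ih (by omega), hinner, altSum, pow_succ]
    ring

lemma sum_chebWeight_mul (f : ℕ → ℝ) {m r : ℕ} (hr : r < m) :
    ∑ i ∈ Finset.range (m + 1), chebWeight m i * f i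
      = (-1) ^ r * (altSum f r - altSum (fun i => f (m - i)) (m - r - 1)) := by
  have right_half : ∑ i ∈ Finset.Ico (r + 1) (m + 1), chebWeight m i * f i
      = -(-1) ^ r * altSum (fun i => f (m - i)) (m - r - 1) := by
    have hsign : (-1 : ℝ) ^ m * (-1) ^ (m - r - 1) = -(-1) ^ r := by
      rw [← pow_add, show m + (m - r - 1) = 2 * (m - r - 1) + 1 + r by omega, pow_add, pow_add,
        pow_mul, neg_one_sq, one_pow]
      ring
    calc ∑ i ∈ Finset.Ico (r + 1) (m + 1), chebWeight m i * f i
        = ∑ i ∈ Finset.range (m - r - 1 + 1), chebWeight m (m - i) * f (m - i) := by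
          rw [Finset.range_eq_Ico, Finset.sum_Ico_reflect (fun i => chebWeight m i * f i) 0
            (by omega : m - r - 1 + 1 ≤ m + 1)]
          congr 2; omega
      _ = (-1) ^ m * ∑ i ∈ Finset.range (m - r - 1 + 1), chebWeight m i * f (m - i) := by
          rw [Finset.mul_sum]
          refine Finset.sum_congr rfl fun i hi => ?_
          rw [chebWeight_sub (by grind), mul_assoc]
      _ = _ := by
          rw [sum_range_chebWeight_mul (fun i => f (m - i)) (by omega), ← mul_assoc, hsign]
  rw [← Finset.sum_range_add_sum_Ico _ (by omega : r + 1 ≤ m + 1),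
    sum_range_chebWeight_mul f hr, right_half]
  ring

lemma sum_chebWeight_mul_cos_eq_zero {m : ℕ} (hm : 0 < m) {θ : ℝ} (hθ : Real.cos (θ / 2) ≠ 0)
    (hsin : Real.sin (m * θ) = 0) :
    ∑ i ∈ Finset.range (m + 1), chebWeight m i * Real.cos (i * θ) = 0 := by
  obtain ⟨N, rfl⟩ := Nat.exists_eq_add_one.2 hm
  have hlast : Real.cos ((N + 1 / 2) * θ) = Real.cos ((N + 1 : ℕ) * θ) * Real.cos (θ / 2) := by
    rw [show (N + 1 / 2) * θ = (N + 1 : ℕ) * θ - θ / 2 by push_cast; ring, Real.cos_sub, hsin]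
    ring
  rw [sum_chebWeight_mul _ N.lt_succ_self, mul_eq_zero]
  right
  refine (mul_eq_zero.1 ?_).resolve_right (mul_ne_zero two_ne_zero hθ)
  rw [sub_mul, altSum_cos_mul, hlast]
  rw [show N + 1 - N - 1 = 0 by omega, altSum, Nat.sub_zero]
  ring

lemma sum_chebWeight_mul_cos_mul_cos_pow {m : ℕ} (hm : 0 < m) (k : ℕ) :
    ∀ j : ℤ, |(j : ℝ)| + k < m →
      ∑ i ∈ Finset.range (m + 1), chebWeight m i *
        (Real.cos (i * (j * (Real.pi / m))) * Real.cos (i * (Real.pi / m)) ^ k) = 0 := by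
  have hm0 : (0 : ℝ) < m := by exact_mod_cast hm
  induction k with
  | zero =>
    intro j hj
    simp only [pow_zero, mul_one]
    refine sum_chebWeight_mul_cos_eq_zero hm (Real.cos_pos_of_mem_Ioo ?_).ne' ?_
    · have hj' : |(j / m : ℝ)| < 1 := by
        rw [abs_div, Nat.abs_cast, div_lt_one hm0]; simpa using hj
      rw [show (j * (Real.pi / m) / 2 : ℝ) = j / m * (Real.pi / 2) by ring]
      constructor <;> nlinarith [abs_lt.1 hj', Real.pi_pos]
    · rw [show (m * (j * (Real.pi / m)) : ℝ) = j * Real.pi by field_simp]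
      exact Real.sin_int_mul_pi j
  | succ k ih =>
    intro j hj
    push_cast at hj
    have hplus := ih (j + 1) (by
      have := abs_add_le (j : ℝ) 1; rw [abs_one] at this; push_cast; linarith)
    have hminus := ih (j - 1) (by
      have := abs_sub (j : ℝ) 1; rw [abs_one] at this; push_cast; linarith)
    have hsum := congrArg₂ (· + ·) hplus hminus
    simp only [← Finset.sum_add_distrib, add_zero] at hsum
    refine (mul_eq_zero.1 (?_ : (2 : ℝ) * _ = 0)).resolve_left two_ne_zero
    rw [← hsum, Finset.mul_sum]
    refine Finset.sum_congr rfl fun i _ => ?_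
    have expand (ε : ℝ) : (i * ((j + ε) * (Real.pi / m)) : ℝ)
        = i * (j * (Real.pi / m)) + ε * (i * (Real.pi / m)) := by ring
    push_cast
    rw [sub_eq_add_neg (j : ℝ), expand, expand, one_mul, neg_one_mul, ← sub_eq_add_neg,
      Real.cos_add, Real.cos_sub]
    ring

end AlternatingSums

section Nodes

variable {m : ℕ} {w z : ℝ}

/-- Half the angle between consecutive extremal points of the Chebyshev polynomial of degree `m`. -/
noncomputable def nodeAngle (m : ℕ) : ℝ := Real.pi / (2 * m)

/-- The extremal points of the Chebyshev polynomial of degree `m` on `[0, 1]`, in increasing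
order and interpolated to a real index. -/
noncomputable def node (m : ℕ) (z : ℝ) : ℝ := Real.sin (z * nodeAngle m) ^ 2

lemma node_natCast (m i : ℕ) :
    node m i = -(1 / 2) * Real.cos (i * (Real.pi / m)) + 1 / 2 := by
  rw [node, nodeAngle, Real.sin_sq, Real.cos_sq,
    show 2 * (i * (Real.pi / (2 * m))) = i * (Real.pi / m) by ring]
  ring

lemma momentsVanish_chebWeight (m : ℕ) :
    MomentsVanish (fun i : Fin (m + 1) => chebWeight m i) (fun i => node m (i : ℕ)) m := by
  simp only [node_natCast]
  refine MomentsVanish.affine (fun k hk => ?_) _ _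
  rw [Fin.sum_univ_eq_sum_range (fun i => chebWeight m i * Real.cos (i * (Real.pi / m)) ^ k)]
  simpa using sum_chebWeight_mul_cos_mul_cos_pow (by omega) k 0 (by simpa using hk)

lemma nodeAngle_nonneg (m : ℕ) : 0 ≤ nodeAngle m := by unfold nodeAngle; positivity

lemma natCast_mul_nodeAngle (hm : 0 < m) : m * nodeAngle m = Real.pi / 2 := by
  unfold nodeAngle; field_simp

lemma natCast_mul_nodeAngle_le (m : ℕ) : m * nodeAngle m ≤ Real.pi / 2 := by
  rcases m.eq_zero_or_pos with rfl | hm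
  · simp only [CharP.cast_eq_zero, zero_mul]
    positivity
  · exact (natCast_mul_nodeAngle hm).le

lemma node_nonneg (m : ℕ) (z : ℝ) : 0 ≤ node m z := sq_nonneg _

lemma node_le_one (m : ℕ) (z : ℝ) : node m z ≤ 1 := Real.sin_sq_le_one _

lemma node_zero (m : ℕ) : node m 0 = 0 := by simp [node]

lemma node_half (hm : 0 < m) : node m (m / 2) = 1 / 2 := by
  have hangle : (m / 2 : ℝ) * nodeAngle m = Real.pi / 4 := by
    linarith [natCast_mul_nodeAngle hm]
  rw [node, hangle, Real.sin_pi_div_four, div_pow, Real.sq_sqrt zero_le_two]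
  norm_num

lemma node_sub_node (m : ℕ) (w z : ℝ) :
    node m w - node m z
      = Real.sin ((w - z) * nodeAngle m) * Real.sin ((w + z) * nodeAngle m) := by
  rw [node, node, sub_mul, add_mul, Real.sin_sub, Real.sin_add]
  linear_combination Real.sin (z * nodeAngle m) ^ 2 * Real.sin_sq_add_cos_sq (w * nodeAngle m)
    - Real.sin (w * nodeAngle m) ^ 2 * Real.sin_sq_add_cos_sq (z * nodeAngle m)

lemma node_sub_node_le (m : ℕ) (hz : 0 ≤ z) (hzw : z ≤ w) :
    node m w - node m z ≤ nodeAngle m ^ 2 * ((w - z) * (w + z)) := by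
  have hα := nodeAngle_nonneg m
  have hdiff : 0 ≤ (w - z) * nodeAngle m := mul_nonneg (sub_nonneg.2 hzw) hα
  have hsum : 0 ≤ (w + z) * nodeAngle m := mul_nonneg (by linarith) hα
  calc node m w - node m z
      ≤ |Real.sin ((w - z) * nodeAngle m)| * |Real.sin ((w + z) * nodeAngle m)| := by
        rw [node_sub_node, ← abs_mul]; exact le_abs_self _
    _ ≤ |(w - z) * nodeAngle m| * |(w + z) * nodeAngle m| :=
        mul_le_mul Real.abs_sin_le_abs Real.abs_sin_le_abs (abs_nonneg _) (abs_nonneg _)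
    _ = nodeAngle m ^ 2 * ((w - z) * (w + z)) := by
        rw [abs_of_nonneg hdiff, abs_of_nonneg hsum]; ring

lemma node_le (m : ℕ) (hz : 0 ≤ z) : node m z ≤ nodeAngle m ^ 2 * z ^ 2 := by
  have h := node_sub_node_le m le_rfl hz
  rw [node_zero] at h
  linarith

lemma div_four_pi_le_sin {x : ℝ} (hx : 0 ≤ x) (hx' : x ≤ 7 / 8 * Real.pi) :
    x / (4 * Real.pi) ≤ Real.sin x := by
  have hπ := Real.pi_pos
  rcases le_total x (Real.pi / 2) with h | h
  · calc x / (4 * Real.pi) ≤ 2 / Real.pi * x := by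
          rw [div_mul_eq_mul_div, div_le_div_iff₀ (by positivity) hπ]; nlinarith
      _ ≤ Real.sin x := Real.mul_le_sin hx h
  · calc x / (4 * Real.pi) ≤ 1 / 4 := by
          rw [div_le_div_iff₀ (by positivity) (by norm_num)]; linarith
      _ ≤ 2 / Real.pi * (Real.pi - x) := by
          rw [div_mul_eq_mul_div, div_le_div_iff₀ (by norm_num) hπ]; linarith
      _ ≤ Real.sin (Real.pi - x) := Real.mul_le_sin (by linarith) (by linarith)
      _ = Real.sin x := Real.sin_pi_sub x

lemma le_node_sub_node (hz : 0 ≤ z) (hzw : z ≤ w) (hw : w ≤ m) (hsum : w + z ≤ 7 * m / 4) :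
    1 / 20 * nodeAngle m ^ 2 * ((w - z) * (w + z)) ≤ node m w - node m z := by
  have hα := nodeAngle_nonneg m
  have hπ := Real.pi_pos
  have hmα := natCast_mul_nodeAngle_le m
  have hconst : (1 / 20 : ℝ) ≤ 2 / Real.pi * (1 / (4 * Real.pi)) := by
    rw [div_mul_div_comm, div_le_div_iff₀ (by norm_num) (by positivity)]
    nlinarith [Real.pi_lt_d2]
  have hx : 0 ≤ (w - z) * nodeAngle m := mul_nonneg (sub_nonneg.2 hzw) hα
  have hy : 0 ≤ (w + z) * nodeAngle m := mul_nonneg (by linarith) hα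
  calc 1 / 20 * nodeAngle m ^ 2 * ((w - z) * (w + z))
      = 1 / 20 * (((w - z) * nodeAngle m) * ((w + z) * nodeAngle m)) := by ring
    _ ≤ 2 / Real.pi * (1 / (4 * Real.pi))
          * (((w - z) * nodeAngle m) * ((w + z) * nodeAngle m)) := by gcongr
    _ = 2 / Real.pi * ((w - z) * nodeAngle m) * ((w + z) * nodeAngle m / (4 * Real.pi)) := by ring
    _ ≤ Real.sin ((w - z) * nodeAngle m) * Real.sin ((w + z) * nodeAngle m) := by
        have hsin_diff : 2 / Real.pi * ((w - z) * nodeAngle m)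
            ≤ Real.sin ((w - z) * nodeAngle m) := Real.mul_le_sin hx (by nlinarith)
        have hsin_sum := div_four_pi_le_sin hy (by nlinarith)
        exact mul_le_mul hsin_diff hsin_sum (by positivity) (le_trans (by positivity) hsin_diff)
    _ = node m w - node m z := (node_sub_node m w z).symm

lemma le_node (hz : 0 ≤ z) (hzm : z ≤ m) : 1 / 20 * nodeAngle m ^ 2 * z ^ 2 ≤ node m z := by
  have h := le_node_sub_node le_rfl hz hzm (by linarith)
  rw [node_zero] at h
  linarith

lemma le_abs_node_sub_node (hw : 0 ≤ w) (hwm : w ≤ m) (hz : 0 ≤ z) (hzm : z ≤ 3 / 4 * m) :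
    1 / 20 * nodeAngle m ^ 2 * (|w - z| * (w + z)) ≤ |node m w - node m z| := by
  rcases le_total z w with h | h
  · rw [abs_of_nonneg (sub_nonneg.2 h)]
    exact (le_node_sub_node hz h hwm (by linarith)).trans (le_abs_self _)
  · rw [abs_sub_comm, abs_sub_comm (node m w), abs_of_nonneg (sub_nonneg.2 h), add_comm]
    exact (le_node_sub_node hw h (by linarith) (by linarith)).trans (le_abs_self _)

lemma monotoneOn_node (m : ℕ) : MonotoneOn (node m) (Set.Icc 0 m) := by
  intro z hz w hw hzw
  have hα := nodeAngle_nonneg m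
  have hπ := Real.pi_pos
  have hzα : 0 ≤ z * nodeAngle m := mul_nonneg hz.1 hα
  have hzwα : z * nodeAngle m ≤ w * nodeAngle m := by gcongr
  have hwα : w * nodeAngle m ≤ Real.pi / 2 :=
    (mul_le_mul_of_nonneg_right hw.2 hα).trans (natCast_mul_nodeAngle_le m)
  exact pow_le_pow_left₀ (Real.sin_nonneg_of_nonneg_of_le_pi hzα (by linarith))
    (Real.sin_le_sin_of_le_of_le_pi_div_two (by linarith) hwα hzwα) 2

lemma sum_one_div_half_integer_sq_le (N : ℕ) :
    ∑ l ∈ Finset.range N, 1 / ((l : ℝ) + 1 / 2) ^ 2 ≤ 8 := by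
  suffices ∑ l ∈ Finset.range N, 1 / ((l : ℝ) + 1 / 2) ^ 2 ≤ 8 - 8 / ((N : ℝ) + 1) from
    this.trans (sub_le_self _ (by positivity))
  induction N with
  | zero => simp
  | succ N ih =>
    have hstep : 1 / ((N : ℝ) + 1 / 2) ^ 2 ≤ 8 / (N + 1) - 8 / ((N + 1 : ℕ) + 1) := by
      push_cast
      rw [div_sub_div _ _ (by positivity) (by positivity),
        div_le_div_iff₀ (by positivity) (by positivity)]
      nlinarith [N.cast_nonneg (α := ℝ)]
    rw [Finset.sum_range_succ]
    linarith

lemma sum_one_div_sub_half_integer_sq_le (r N : ℕ) :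
    ∑ i ∈ Finset.range (r + 1 + N), 1 / ((i : ℝ) - (r + 1 / 2)) ^ 2 ≤ 16 := by
  have left : ∑ i ∈ Finset.range (r + 1), 1 / ((i : ℝ) - (r + 1 / 2)) ^ 2 ≤ 8 := by
    rw [← Finset.sum_range_reflect]
    refine (Finset.sum_congr rfl fun i hi => ?_).le.trans
      (sum_one_div_half_integer_sq_le (r + 1))
    rw [Nat.add_sub_cancel, Nat.cast_sub (by grind)]
    congr 1; ring
  have right : ∑ l ∈ Finset.range N, 1 / (((r + 1 + l : ℕ) : ℝ) - (r + 1 / 2)) ^ 2 ≤ 8 := by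
    refine le_trans (Finset.sum_congr rfl fun i _ => ?_).le (sum_one_div_half_integer_sq_le N)
    push_cast
    congr 1; ring
  rw [Finset.sum_range_add]
  linarith

end Nodes

section SecondDividedDifference

variable {ι : Type*} [Fintype ι] {v t : ι → ℝ} {m : ℕ} {y q : ℝ}

/-- The functional `f ↦ ∑ i, v i * f[t i, y, q]`, a second divided difference, written as signed
weights on `adjoinPoint q (adjoinPoint y t)`. -/
noncomputable def secondDivDiffWeight (v t : ι → ℝ) (y q : ℝ) : Option (Option ι) → ℝ :=
  divDiffWeight (divDiffWeight v t y) (adjoinPoint y t) q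

lemma secondDivDiffWeight_some_some (i : ι) :
    secondDivDiffWeight v t y q (some (some i)) = v i / ((t i - y) * (t i - q)) :=
  div_div _ _ _

lemma secondDivDiffWeight_some_none :
    secondDivDiffWeight v t y q (some none) = (∑ i, v i / (y - t i)) / (y - q) :=
  rfl

lemma secondDivDiffWeight_none (hqy : q ≠ y) (hy : ∀ i, t i ≠ y) (hq : ∀ i, t i ≠ q) :
    secondDivDiffWeight v t y q none = (∑ i, v i / (q - t i)) / (q - y) := by
  have hqy' : q - y ≠ 0 := sub_ne_zero.2 hqy
  have partial_fractions (i : ι) : v i / (t i - y) / (q - t i)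
      = (v i / (q - t i) - v i / (y - t i)) / (q - y) := by
    have h₁ : t i - y ≠ 0 := sub_ne_zero.2 (hy i)
    have h₂ : q - t i ≠ 0 := sub_ne_zero.2 (hq i).symm
    have h₃ : y - t i ≠ 0 := sub_ne_zero.2 (hy i).symm
    field_simp
    ring
  calc secondDivDiffWeight v t y q none
      = (∑ i, v i / (y - t i)) / (q - y) + ∑ i, v i / (t i - y) / (q - t i) :=
        Fintype.sum_option _
    _ = _ := by
        simp only [partial_fractions, ← Finset.sum_div, Finset.sum_sub_distrib]
        ring

lemma MomentsVanish.secondDivDiff (h : MomentsVanish v t m) (hqy : q ≠ y) (hy : ∀ i, t i ≠ y)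
    (hq : ∀ i, t i ≠ q) :
    MomentsVanish (secondDivDiffWeight v t y q) (adjoinPoint q (adjoinPoint y t)) (m + 2) :=
  (h.divDiff hy).divDiff fun o => by
    cases o with
    | none => exact hqy.symm
    | some i => exact hq i

lemma sum_secondDivDiffWeight_mul_abs_sub (hqy : q < y) (ht : ∀ i, t i < q ∨ y < t i) :
    ∑ o, secondDivDiffWeight v t y q o * |adjoinPoint q (adjoinPoint y t) o - q|
      = ∑ i, v i * (if t i < q then 2 / (y - t i) else 0) := by
  rw [secondDivDiffWeight, sum_divDiffWeight_mul _ _ _ fun x => |x - q|]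
  simp only [sub_self, abs_zero, sub_zero]
  rw [sum_divDiffWeight_mul v t y fun x => |x - q| / (x - q)]
  refine Finset.sum_congr rfl fun i _ => ?_
  have hy : |y - q| / (y - q) = 1 := by
    rw [abs_of_pos (sub_pos.2 hqy), div_self (sub_pos.2 hqy).ne']
  rcases ht i with h | h
  · have hi : |t i - q| / (t i - q) = -1 := by
      rw [abs_of_neg (sub_neg.2 h), neg_div, div_self (sub_neg.2 h).ne]
    rw [hy, hi, if_pos h, ← neg_sub y (t i), div_neg]
    ring
  · have hqi : 0 < t i - q := by linarith
    rw [hy, abs_of_pos hqi, div_self hqi.ne', if_neg (by linarith), sub_self, zero_div]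

end SecondDividedDifference

section ExtremalSignedMeasure

lemma altSum_neg (f : ℕ → ℝ) (r : ℕ) : altSum (fun i => -f i) r = -altSum f r := by
  induction r with
  | zero => simp only [altSum, neg_div]
  | succ r ih => simp only [altSum, ih]; ring

lemma abs_sum_chebWeight_div_le {m r : ℕ} (hr : r < m) {t : ℕ → ℝ}
    (ht : MonotoneOn t (Set.Iic m)) {z : ℝ} (hz : z ∈ Set.Ioo (t r) (t (r + 1))) :
    |∑ i ∈ Finset.range (m + 1), chebWeight m i / (z - t i)|
      ≤ 1 / (z - t r) + 1 / (t (r + 1) - z) := by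
  have left : altSum (fun i => 1 / (z - t i)) r ∈ Set.Icc 0 (1 / (z - t r)) := by
    have hpos {i : ℕ} (hi : i ≤ r) : 0 < z - t i :=
      sub_pos.2 ((ht (hi.trans hr.le) hr.le hi).trans_lt hz.1)
    refine altSum_mem_Icc (one_div_pos.2 (hpos r.zero_le)).le fun i hi j hj hij => ?_
    exact one_div_le_one_div_of_le (hpos hj)
      (sub_le_sub_left (ht (hi.trans hr.le) (hj.trans hr.le) hij) z)
  have right : altSum (fun i => 1 / (t (m - i) - z)) (m - r - 1)
      ∈ Set.Icc 0 (1 / (t (r + 1) - z)) := by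
    have hpos {i : ℕ} (hi : i ≤ m - r - 1) : 0 < t (m - i) - z :=
      sub_pos.2 (hz.2.trans_le (ht (Set.mem_Iic.2 hr) (Set.mem_Iic.2 (Nat.sub_le _ _)) (by omega)))
    rw [show r + 1 = m - (m - r - 1) by omega]
    refine altSum_mem_Icc (one_div_pos.2 (hpos (Nat.zero_le _))).le fun i _ j hj hij => ?_
    exact one_div_le_one_div_of_le (hpos hj) (sub_le_sub_right
      (ht (Set.mem_Iic.2 (Nat.sub_le _ _)) (Set.mem_Iic.2 (Nat.sub_le _ _)) (by omega)) z)
  have hsum : ∑ i ∈ Finset.range (m + 1), chebWeight m i / (z - t i)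
      = (-1) ^ r * (altSum (fun i => 1 / (z - t i)) r
        + altSum (fun i => 1 / (t (m - i) - z)) (m - r - 1)) := by
    simp only [div_eq_mul_one_div (chebWeight m _)]
    rw [sum_chebWeight_mul (fun i => 1 / (z - t i)) hr, ← sub_neg_eq_add, ← altSum_neg]
    simp only [← one_div_neg_eq_neg_one_div, neg_sub]
  rw [hsum, abs_mul, abs_neg_one_pow, one_mul, abs_of_nonneg (add_nonneg left.1 right.1)]
  exact add_le_add left.2 right.2

variable {m r : ℕ}

/-- A lower bound for the distances between `node m r`, `node m (r + 1 / 2)`,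
`node m (r + 3 / 4)` and `node m (r + 1)`. -/
noncomputable def nodeSep (m r : ℕ) : ℝ := nodeAngle m ^ 2 * (r + 1 / 2) / 40

lemma nodeAngle_pos (hm : 0 < m) : 0 < nodeAngle m := by
  unfold nodeAngle; positivity

lemma nodeSep_pos (hm : 0 < m) (r : ℕ) : 0 < nodeSep m r := by
  have := nodeAngle_pos hm
  unfold nodeSep; positivity

lemma nodeSep_le {w z : ℝ} (hz : 0 ≤ z) (hzw : z ≤ w) (hw : w ≤ m) (hsum : w + z ≤ 7 * m / 4)
    (h : (r + 1 / 2) / 2 ≤ (w - z) * (w + z)) : nodeSep m r ≤ node m w - node m z := by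
  refine le_trans ?_ (le_node_sub_node hz hzw hw hsum)
  calc nodeSep m r = 1 / 20 * nodeAngle m ^ 2 * ((r + 1 / 2) / 2) := by rw [nodeSep]; ring
    _ ≤ _ := by gcongr

/-- The second divided difference at the two points `node m (r + 3 / 4)` and
`node m (r + 1 / 2)` of the divided difference at all Chebyshev extremal points. -/
noncomputable def extremalWeight (m r : ℕ) : Option (Option (Fin (m + 1))) → ℝ :=
  secondDivDiffWeight (fun i => chebWeight m i) (fun i => node m (i : ℕ))
    (node m (r + 3 / 4)) (node m (r + 1 / 2))

/-- The support of `extremalWeight m r`. -/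
noncomputable def extremalPoint (m r : ℕ) : Option (Option (Fin (m + 1))) → ℝ :=
  adjoinPoint (node m (r + 1 / 2)) (adjoinPoint (node m (r + 3 / 4)) fun i => node m (i : ℕ))

lemma extremalPoint_mem_Icc (m r : ℕ) (o : Option (Option (Fin (m + 1)))) :
    extremalPoint m r o ∈ Set.Icc 0 1 := by
  rcases o with _ | _ | i <;> exact ⟨node_nonneg _ _, node_le_one _ _⟩

lemma node_natCast_monotoneOn (m : ℕ) : MonotoneOn (fun i : ℕ => node m i) (Set.Iic m) :=
  fun i hi j hj hij => monotoneOn_node m ⟨i.cast_nonneg, Nat.cast_le.2 hi⟩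
    ⟨j.cast_nonneg, Nat.cast_le.2 hj⟩ (Nat.cast_le.2 hij)

variable (h : 2 * r + 1 ≤ m)
include h

lemma nodeSep_le_mid_sub_left : nodeSep m r ≤ node m (r + 1 / 2) - node m r := by
  have hm : (2 * r + 1 : ℝ) ≤ m := by exact_mod_cast h
  have : (0 : ℝ) ≤ r := r.cast_nonneg
  apply nodeSep_le <;> nlinarith

lemma nodeSep_le_inner_sub_mid :
    nodeSep m r ≤ node m (r + 3 / 4) - node m (r + 1 / 2) := by
  have hm : (2 * r + 1 : ℝ) ≤ m := by exact_mod_cast h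
  have : (0 : ℝ) ≤ r := r.cast_nonneg
  apply nodeSep_le <;> nlinarith

lemma nodeSep_le_right_sub_inner :
    nodeSep m r ≤ node m (r + 1 : ℕ) - node m (r + 3 / 4) := by
  have hm : (2 * r + 1 : ℝ) ≤ m := by exact_mod_cast h
  have : (0 : ℝ) ≤ r := r.cast_nonneg
  apply nodeSep_le <;> push_cast <;> nlinarith

lemma node_lt_mid_or_inner_lt (i : Fin (m + 1)) :
    node m (i : ℕ) < node m (r + 1 / 2) ∨ node m (r + 3 / 4) < node m (i : ℕ) := by
  have hsep := nodeSep_pos (show 0 < m by omega) r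
  have hi : (i : ℕ) ≤ m := Nat.lt_succ_iff.1 i.isLt
  rcases le_or_gt (i : ℕ) r with hir | hir
  · exact .inl ((node_natCast_monotoneOn m hi (show r ≤ m by omega) hir).trans_lt
      (by linarith [nodeSep_le_mid_sub_left h]))
  · exact .inr (lt_of_lt_of_le (by linarith [nodeSep_le_right_sub_inner h])
      (node_natCast_monotoneOn m (show r + 1 ≤ m by omega) hi hir))

lemma momentsVanish_extremalWeight :
    MomentsVanish (extremalWeight m r) (extremalPoint m r) (m + 2) := by
  have hsep := nodeSep_pos (show 0 < m by omega) r
  have hqy := nodeSep_le_inner_sub_mid h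
  have hsplit := node_lt_mid_or_inner_lt h
  refine (momentsVanish_chebWeight m).secondDivDiff (by linarith) (fun i => ?_) (fun i => ?_)
  · rcases hsplit i with hi | hi <;> linarith
  · rcases hsplit i with hi | hi <;> linarith

lemma abs_sum_chebWeight_div_sub_node_le {z : ℝ} (hleft : nodeSep m r ≤ z - node m r)
    (hright : nodeSep m r ≤ node m (r + 1 : ℕ) - z) :
    |∑ i : Fin (m + 1), chebWeight m i / (z - node m (i : ℕ))| ≤ 2 / nodeSep m r := by
  have hsep := nodeSep_pos (show 0 < m by omega) r
  rw [Fin.sum_univ_eq_sum_range (fun i => chebWeight m i / (z - node m i))]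
  calc _ ≤ 1 / (z - node m r) + 1 / (node m (r + 1 : ℕ) - z) :=
        abs_sum_chebWeight_div_le (by omega) (node_natCast_monotoneOn m)
          ⟨by linarith, by linarith⟩
    _ ≤ 1 / nodeSep m r + 1 / nodeSep m r := by gcongr
    _ = 2 / nodeSep m r := by ring

lemma abs_extremalWeight_none_le : |extremalWeight m r none| ≤ 2 / nodeSep m r ^ 2 := by
  have hsep := nodeSep_pos (show 0 < m by omega) r
  have hleft := nodeSep_le_mid_sub_left h
  have hqy := nodeSep_le_inner_sub_mid h
  have hright := nodeSep_le_right_sub_inner h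
  have hsplit := node_lt_mid_or_inner_lt h
  rw [extremalWeight, secondDivDiffWeight_none (by linarith)
    (fun i => by rcases hsplit i with hi | hi <;> linarith)
    (fun i => by rcases hsplit i with hi | hi <;> linarith), abs_div, abs_sub_comm]
  calc _ ≤ 2 / nodeSep m r / nodeSep m r :=
        div_le_div₀ (by positivity) (abs_sum_chebWeight_div_sub_node_le h hleft (by linarith)) hsep
          (hqy.trans (le_abs_self _))
    _ = _ := by rw [div_div, sq]

lemma abs_extremalWeight_some_none_le :
    |extremalWeight m r (some none)| ≤ 2 / nodeSep m r ^ 2 := by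
  have hsep := nodeSep_pos (show 0 < m by omega) r
  have hleft := nodeSep_le_mid_sub_left h
  have hqy := nodeSep_le_inner_sub_mid h
  have hright := nodeSep_le_right_sub_inner h
  rw [extremalWeight, secondDivDiffWeight_some_none, abs_div]
  calc _ ≤ 2 / nodeSep m r / nodeSep m r :=
        div_le_div₀ (by positivity) (abs_sum_chebWeight_div_sub_node_le h (by linarith) hright) hsep
          (hqy.trans (le_abs_self _))
    _ = _ := by rw [div_div, sq]

lemma le_abs_node_sub_mid {x : ℝ} (hx : 0 ≤ x) (hxm : x ≤ m) :
    1 / 20 * nodeAngle m ^ 2 * (|x - (r + 1 / 2)| * (x + (r + 1 / 2)))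
      ≤ |node m x - node m (r + 1 / 2)| := by
  have hm : (2 * r + 1 : ℝ) ≤ m := by exact_mod_cast h
  have : (0 : ℝ) ≤ r := r.cast_nonneg
  exact le_abs_node_sub_node hx hxm (by linarith) (by linarith)

lemma le_abs_node_sub_inner {x : ℝ} (hx : 0 ≤ x) (hxm : x ≤ m)
    (hfar : 1 / 2 ≤ |x - (r + 1 / 2)|) :
    1 / 40 * nodeAngle m ^ 2 * (|x - (r + 1 / 2)| * (x + (r + 1 / 2)))
      ≤ |node m x - node m (r + 3 / 4)| := by
  have hm : (2 * r + 1 : ℝ) ≤ m := by exact_mod_cast h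
  have : (0 : ℝ) ≤ r := r.cast_nonneg
  have habs : |x - (r + 1 / 2)| / 2 ≤ |x - (r + 3 / 4)| := by
    have := abs_sub_abs_le_abs_sub (x - (r + 1 / 2)) (1 / 4)
    rw [show x - (r + 1 / 2) - 1 / 4 = x - (r + 3 / 4) by ring,
      abs_of_pos (by norm_num : (0 : ℝ) < 1 / 4)] at this
    linarith
  calc _ = 1 / 20 * nodeAngle m ^ 2 * (|x - (r + 1 / 2)| / 2 * (x + (r + 1 / 2))) := by ring
    _ ≤ 1 / 20 * nodeAngle m ^ 2 * (|x - (r + 3 / 4)| * (x + (r + 3 / 4))) :=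
        mul_le_mul_of_nonneg_left (mul_le_mul habs (by linarith) (by linarith) (abs_nonneg _))
          (by positivity)
    _ ≤ _ := le_abs_node_sub_node hx hxm (by linarith) (by linarith)

omit h in
lemma half_le_abs_natCast_sub_half (i r : ℕ) : (1 / 2 : ℝ) ≤ |(i : ℝ) - (r + 1 / 2)| := by
  rcases le_or_gt i r with hir | hir
  · have hir' : (i : ℝ) ≤ r := by exact_mod_cast hir
    rw [abs_sub_comm]
    exact le_trans (by linarith) (le_abs_self _)
  · have hir' : (r + 1 : ℝ) ≤ i := by exact_mod_cast hir
    exact le_trans (by linarith) (le_abs_self _)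

lemma abs_extremalWeight_some_some_le (i : Fin (m + 1)) :
    |extremalWeight m r (some (some i))| ≤ 800 / (nodeAngle m ^ 4 *
      ((i : ℕ) + (r + 1 / 2)) ^ 2 * ((i : ℕ) - (r + 1 / 2)) ^ 2) := by
  have hα := nodeAngle_pos (show 0 < m by omega)
  have hi := (i : ℕ).cast_nonneg (α := ℝ)
  have him : ((i : ℕ) : ℝ) ≤ m := by exact_mod_cast Nat.lt_succ_iff.1 i.isLt
  have hfar := half_le_abs_natCast_sub_half i r
  have mid_dist := le_abs_node_sub_mid h hi him
  have inner_dist := le_abs_node_sub_inner h hi him hfar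
  have hone := abs_chebWeight_le_one m i
  rw [extremalWeight, secondDivDiffWeight_some_some, abs_div, abs_mul]
  rw [← sq_abs (((i : ℕ) : ℝ) - _)]
  generalize |((i : ℕ) : ℝ) - (r + 1 / 2)| = d at hfar mid_dist inner_dist ⊢
  have : 0 < d := by linarith
  calc _ ≤ 1 / (1 / 40 * nodeAngle m ^ 2 * (d * ((i : ℕ) + (r + 1 / 2))) *
          (1 / 20 * nodeAngle m ^ 2 * (d * ((i : ℕ) + (r + 1 / 2))))) := by gcongr
    _ = _ := by field_simp; norm_num

lemma sum_one_div_sub_sq_le :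
    ∑ i : Fin (m + 1), 1 / (((i : ℕ) : ℝ) - (r + 1 / 2)) ^ 2 ≤ 16 := by
  rw [Fin.sum_univ_eq_sum_range (fun i => 1 / ((i : ℝ) - (r + 1 / 2)) ^ 2),
    show m + 1 = r + 1 + (m - r) by omega]
  exact sum_one_div_sub_half_integer_sq_le r (m - r)

lemma sum_abs_extremalWeight_le :
    ∑ o, |extremalWeight m r o| ≤ 290 / nodeSep m r ^ 2 := by
  have hα := nodeAngle_pos (show 0 < m by omega)
  have hsep := nodeSep_pos (show 0 < m by omega) r
  have at_nodes : ∑ i, |extremalWeight m r (some (some i))| ≤ 8 / nodeSep m r ^ 2 := by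
    calc _ ≤ ∑ i : Fin (m + 1), 800 / (nodeAngle m ^ 4 * (r + 1 / 2) ^ 2) *
          (1 / (((i : ℕ) : ℝ) - (r + 1 / 2)) ^ 2) := by
          refine Finset.sum_le_sum fun i _ => (abs_extremalWeight_some_some_le h i).trans ?_
          rw [div_mul_div_comm, mul_one]
          have hi := (i : ℕ).cast_nonneg (α := ℝ)
          have hne : ((i : ℕ) : ℝ) - (r + 1 / 2) ≠ 0 := abs_pos.1
            (one_half_pos.trans_le (half_le_abs_natCast_sub_half i r))
          gcongr 800 / (_ * ?_ ^ 2 * _)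
          exact le_add_of_nonneg_left hi
      _ ≤ 800 / (nodeAngle m ^ 4 * (r + 1 / 2) ^ 2) * 16 := by
          rw [← Finset.mul_sum]
          exact mul_le_mul_of_nonneg_left (sum_one_div_sub_sq_le h) (by positivity)
      _ = 8 / nodeSep m r ^ 2 := by rw [nodeSep]; field_simp; norm_num
  rw [Fintype.sum_option, Fintype.sum_option]
  calc _ ≤ 2 / nodeSep m r ^ 2 + (2 / nodeSep m r ^ 2 + 8 / nodeSep m r ^ 2) :=
        add_le_add (abs_extremalWeight_none_le h)
          (add_le_add (abs_extremalWeight_some_none_le h) at_nodes)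
    _ = 12 / nodeSep m r ^ 2 := by ring
    _ ≤ 290 / nodeSep m r ^ 2 := by gcongr; norm_num

lemma sum_abs_extremalWeight_mul_le :
    ∑ o, |extremalWeight m r o| * extremalPoint m r o
      ≤ 290 / nodeSep m r ^ 2 * node m (r + 1 / 2) := by
  have hm : (2 * r + 1 : ℝ) ≤ m := by exact_mod_cast h
  have : (0 : ℝ) ≤ r := r.cast_nonneg
  have hα := nodeAngle_pos (show 0 < m by omega)
  have hsep := nodeSep_pos (show 0 < m by omega) r
  have at_nodes : ∑ i : Fin (m + 1), |extremalWeight m r (some (some i))| * node m (i : ℕ)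
      ≤ 8 / nodeSep m r ^ 2 * (nodeAngle m ^ 2 * (r + 1 / 2) ^ 2) := by
    calc _ ≤ ∑ i : Fin (m + 1), 800 / nodeAngle m ^ 2 *
          (1 / (((i : ℕ) : ℝ) - (r + 1 / 2)) ^ 2) := by
          refine Finset.sum_le_sum fun i _ => ?_
          have hi := (i : ℕ).cast_nonneg (α := ℝ)
          calc _ ≤ 800 / (nodeAngle m ^ 4 * ((i : ℕ) + (r + 1 / 2)) ^ 2 *
                ((i : ℕ) - (r + 1 / 2)) ^ 2) * (nodeAngle m ^ 2 * ((i : ℕ) + (r + 1 / 2)) ^ 2) :=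
                mul_le_mul (abs_extremalWeight_some_some_le h i) ((node_le m hi).trans
                  (by gcongr; linarith)) (node_nonneg _ _) (by positivity)
            _ = _ := by field_simp
      _ ≤ 800 / nodeAngle m ^ 2 * 16 := by
          rw [← Finset.mul_sum]
          exact mul_le_mul_of_nonneg_left (sum_one_div_sub_sq_le h) (by positivity)
      _ = _ := by rw [nodeSep]; field_simp; norm_num
  have at_mid : |extremalWeight m r none| * node m (r + 1 / 2)
      ≤ 2 / nodeSep m r ^ 2 * (nodeAngle m ^ 2 * (r + 1 / 2) ^ 2) :=
    mul_le_mul (abs_extremalWeight_none_le h) (node_le m (by linarith)) (node_nonneg _ _)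
      (by positivity)
  have at_inner : |extremalWeight m r (some none)| * node m (r + 3 / 4)
      ≤ 2 / nodeSep m r ^ 2 * (nodeAngle m ^ 2 * (r + 3 / 4) ^ 2) :=
    mul_le_mul (abs_extremalWeight_some_none_le h) (node_le m (by linarith)) (node_nonneg _ _)
      (by positivity)
  rw [Fintype.sum_option, Fintype.sum_option]
  calc _ ≤ 2 / nodeSep m r ^ 2 * (nodeAngle m ^ 2 * (r + 1 / 2) ^ 2)
          + (2 / nodeSep m r ^ 2 * (nodeAngle m ^ 2 * (r + 3 / 4) ^ 2)
            + 8 / nodeSep m r ^ 2 * (nodeAngle m ^ 2 * (r + 1 / 2) ^ 2)) :=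
        add_le_add at_mid (add_le_add at_inner at_nodes)
    _ = 290 / nodeSep m r ^ 2 * (1 / 20 * nodeAngle m ^ 2 *
          ((10 * (r + 1 / 2) ^ 2 + 2 * (r + 3 / 4) ^ 2) / (29 / 2))) := by ring
    _ ≤ 290 / nodeSep m r ^ 2 * (1 / 20 * nodeAngle m ^ 2 * (r + 1 / 2) ^ 2) := by
        gcongr; nlinarith
    _ ≤ _ := by gcongr; exact le_node (by linarith) (by linarith)

lemma inner_sub_node_pos {i : ℕ} (hi : i ≤ r) : 0 < node m (r + 3 / 4) - node m i := by
  have hsep := nodeSep_pos (show 0 < m by omega) r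
  have := node_natCast_monotoneOn m (show i ≤ m by omega) (show r ≤ m by omega) hi
  linarith [nodeSep_le_mid_sub_left h, nodeSep_le_inner_sub_mid h]

omit h in
lemma inner_sub_node_le {i : ℕ} (hi : i ≤ r) :
    node m (r + 3 / 4) - node m i
      ≤ nodeAngle m ^ 2 * ((r + 3 / 4 - i) * (r + 3 / 4 + i)) := by
  have : (i : ℝ) ≤ r := by exact_mod_cast hi
  exact node_sub_node_le m i.cast_nonneg (by linarith)

omit h in
lemma le_one_div_sub_one_div_inner_sub (h : 2 * (r + 1) + 1 ≤ m) :
    1 / (120 * nodeAngle m ^ 2 * ((r + 1 : ℕ) + 1 / 2))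
      ≤ 1 / (node m ((r + 1 : ℕ) + 3 / 4) - node m (r + 1 : ℕ))
        - 1 / (node m ((r + 1 : ℕ) + 3 / 4) - node m r) := by
  have hα := nodeAngle_pos (show 0 < m by omega)
  have hm : (2 * (r + 1 : ℕ) + 1 : ℝ) ≤ m := by exact_mod_cast h
  have hr : (0 : ℝ) ≤ r := r.cast_nonneg
  have pos_right := inner_sub_node_pos h le_rfl
  have pos_left := inner_sub_node_pos h r.le_succ
  have le_right := (inner_sub_node_le (m := m) (le_refl (r + 1))).trans_eq
    (show _ = nodeAngle m ^ 2 * (r * (3 / 2) + 33 / 16) by push_cast; ring)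
  have le_left := (inner_sub_node_le (m := m) r.le_succ).trans_eq
    (show _ = nodeAngle m ^ 2 * (r * (7 / 2) + 49 / 16) by push_cast; ring)
  have step : nodeAngle m ^ 2 * (r * (1 / 10) + 1 / 20) ≤ node m (r + 1 : ℕ) - node m r :=
    le_trans (le_of_eq (by push_cast; ring)) (le_node_sub_node hr (by push_cast; linarith)
      (by push_cast at hm ⊢; linarith) (by push_cast at hm ⊢; linarith))
  rw [div_sub_div _ _ pos_right.ne' pos_left.ne', one_mul, mul_one, sub_sub_sub_cancel_left]
  calc 1 / (120 * nodeAngle m ^ 2 * ((r + 1 : ℕ) + 1 / 2))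
      ≤ (nodeAngle m ^ 2 * (r * (1 / 10) + 1 / 20)) / ((nodeAngle m ^ 2 * (r * (3 / 2) + 33 / 16))
        * (nodeAngle m ^ 2 * (r * (7 / 2) + 49 / 16))) := by
        rw [div_le_div_iff₀ (by positivity) (by positivity)]
        push_cast
        have hα4 : 0 ≤ nodeAngle m ^ 4 := by positivity
        nlinarith [mul_nonneg hα4 hr, mul_nonneg hα4 (mul_nonneg hr hr)]
    _ ≤ _ := div_le_div₀ (le_trans (by positivity) step) step (mul_pos pos_right pos_left)
        (mul_le_mul le_right le_left pos_left.le (by positivity))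

lemma le_altSum_one_div_inner_sub :
    1 / (120 * nodeAngle m ^ 2 * (r + 1 / 2))
      ≤ altSum (fun i => 1 / (node m (r + 3 / 4) - node m i)) r := by
  cases r with
  | zero =>
    have hα := nodeAngle_pos (show 0 < m by omega)
    have hpos := inner_sub_node_pos h le_rfl
    have hle := inner_sub_node_le (m := m) (le_refl 0)
    rw [altSum, div_div, div_le_div_iff₀ (by positivity) (by positivity)]
    push_cast at hle ⊢
    nlinarith
  | succ r =>
    have hmono : MonotoneOn (fun i : ℕ => 1 / (node m ((r + 1 : ℕ) + 3 / 4) - node m i))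
        (Set.Iic r) := fun i hi j hj hij =>
      one_div_le_one_div_of_le (inner_sub_node_pos h (Nat.le_succ_of_le hj)) (sub_le_sub_left
        (node_natCast_monotoneOn m (show i ≤ m by grind) (show j ≤ m by grind) hij) _)
    exact (le_one_div_sub_one_div_inner_sub h).trans
      (sub_le_altSum_succ (one_div_pos.2 (inner_sub_node_pos h (Nat.zero_le _))).le hmono)

lemma sum_extremalWeight_mul_abs_sub :
    ∑ o, extremalWeight m r o * |extremalPoint m r o - node m (r + 1 / 2)|
      = 2 * (-1) ^ r * altSum (fun i => 1 / (node m (r + 3 / 4) - node m i)) r := by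
  have hsep := nodeSep_pos (show 0 < m by omega) r
  have hqy := nodeSep_le_inner_sub_mid h
  have left_iff {i : ℕ} (hi : i < m + 1) :
      node m i < node m (r + 1 / 2) ↔ i ∈ Finset.range (r + 1) := by
    rw [Finset.mem_range, Nat.lt_succ_iff]
    refine ⟨fun hlt => le_of_not_gt fun hri => ?_, fun hir => ?_⟩
    · have := node_natCast_monotoneOn m (show r + 1 ≤ m by omega) (Nat.lt_succ_iff.1 hi) hri
      linarith [nodeSep_le_right_sub_inner h]
    · have := node_natCast_monotoneOn m (show i ≤ m by omega) (show r ≤ m by omega) hir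
      linarith [nodeSep_le_mid_sub_left h]
  calc _ = ∑ i ∈ Finset.range (m + 1), chebWeight m i *
          (if node m i < node m (r + 1 / 2) then 2 / (node m (r + 3 / 4) - node m i) else 0) := by
        rw [extremalWeight, extremalPoint, sum_secondDivDiffWeight_mul_abs_sub (by linarith)
          (node_lt_mid_or_inner_lt h), Fin.sum_univ_eq_sum_range (fun i => chebWeight m i *
          (if node m i < node m (r + 1 / 2) then 2 / (node m (r + 3 / 4) - node m i) else 0))]
    _ = ∑ i ∈ Finset.range (r + 1), chebWeight m i *
          (2 * (1 / (node m (r + 3 / 4) - node m i))) := by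
        rw [← Finset.sum_subset (Finset.range_subset_range.2 (by omega : r + 1 ≤ m + 1))
          fun i hi hir => by rw [if_neg (mt (left_iff (Finset.mem_range.1 hi)).1 hir), mul_zero]]
        refine Finset.sum_congr rfl fun i hi => ?_
        rw [if_pos ((left_iff (by grind)).2 hi), mul_one_div]
    _ = _ := by
        rw [mul_comm 2, mul_assoc, mul_left_comm, ← sum_range_chebWeight_mul _ (by omega : r < m),
          Finset.mul_sum]
        exact Finset.sum_congr rfl fun i _ => by ring

lemma node_mid_le_half : node m (r + 1 / 2) ≤ 1 / 2 := by
  have hm : (2 * r + 1 : ℝ) ≤ m := by exact_mod_cast h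
  have : (0 : ℝ) ≤ r := r.cast_nonneg
  calc node m (r + 1 / 2) ≤ node m (m / 2) :=
        monotoneOn_node m ⟨by linarith, by linarith⟩ ⟨by linarith, by linarith⟩ (by linarith)
    _ = 1 / 2 := node_half (by omega)

/-- `extremalWeight` with its sign fixed and its total variation brought below `1 / 2`. -/
noncomputable def scaledExtremalWeight (m r : ℕ) (o : Option (Option (Fin (m + 1)))) : ℝ :=
  (-1) ^ r * (nodeSep m r ^ 2 / 580) * extremalWeight m r o

omit h in
lemma abs_scaledExtremalWeight (o : Option (Option (Fin (m + 1)))) :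
    |scaledExtremalWeight m r o| = nodeSep m r ^ 2 / 580 * |extremalWeight m r o| := by
  rw [scaledExtremalWeight, abs_mul, abs_mul, abs_neg_one_pow, one_mul,
    abs_of_nonneg (by positivity : 0 ≤ nodeSep m r ^ 2 / 580)]

lemma sum_abs_scaledExtremalWeight_le : ∑ o, |scaledExtremalWeight m r o| ≤ 1 / 2 := by
  have hsep := nodeSep_pos (show 0 < m by omega) r
  simp only [abs_scaledExtremalWeight, ← Finset.mul_sum]
  calc _ ≤ nodeSep m r ^ 2 / 580 * (290 / nodeSep m r ^ 2) := by
        gcongr; exact sum_abs_extremalWeight_le h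
    _ = 1 / 2 := by field_simp; norm_num

lemma sum_abs_scaledExtremalWeight_mul_le :
    ∑ o, |scaledExtremalWeight m r o| * extremalPoint m r o ≤ node m (r + 1 / 2) / 2 := by
  have hsep := nodeSep_pos (show 0 < m by omega) r
  simp only [abs_scaledExtremalWeight, mul_assoc, ← Finset.mul_sum]
  calc _ ≤ nodeSep m r ^ 2 / 580 * (290 / nodeSep m r ^ 2 * node m (r + 1 / 2)) := by
        gcongr; exact sum_abs_extremalWeight_mul_le h
    _ = _ := by field_simp; norm_num

lemma le_sum_scaledExtremalWeight_mul_abs_sub :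
    1 / 10 ^ 8 * (nodeAngle m * √(node m (r + 1 / 2)))
      ≤ ∑ o, scaledExtremalWeight m r o * |extremalPoint m r o - node m (r + 1 / 2)| := by
  have hα := nodeAngle_pos (show 0 < m by omega)
  have hsqrt : √(node m (r + 1 / 2)) ≤ nodeAngle m * (r + 1 / 2) :=
    Real.sqrt_le_iff.2 ⟨by positivity, by rw [mul_pow]; exact node_le m (by positivity)⟩
  calc 1 / 10 ^ 8 * (nodeAngle m * √(node m (r + 1 / 2)))
      ≤ 1 / 10 ^ 8 * (nodeAngle m * (nodeAngle m * (r + 1 / 2))) := by gcongr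
    _ ≤ 1 / (1600 * 290 * 120) * (nodeAngle m * (nodeAngle m * (r + 1 / 2))) := by
        gcongr; norm_num
    _ = nodeSep m r ^ 2 / 580 * (2 * (1 / (120 * nodeAngle m ^ 2 * (r + 1 / 2)))) := by
        rw [nodeSep]; field_simp; norm_num
    _ ≤ nodeSep m r ^ 2 / 580 *
          (2 * altSum (fun i => 1 / (node m (r + 3 / 4) - node m i)) r) := by
        gcongr; exact le_altSum_one_div_inner_sub h
    _ = _ := by
        have hsign : ((-1 : ℝ) ^ r) ^ 2 = 1 := by rw [← pow_mul, mul_comm, pow_mul]; simp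
        simp only [scaledExtremalWeight, mul_assoc, ← Finset.mul_sum]
        rw [sum_extremalWeight_mul_abs_sub h]
        linear_combination -(nodeSep m r ^ 2 / 580 *
          (2 * altSum (fun i => 1 / (node m (r + 3 / 4) - node m i)) r)) * hsign

end ExtremalSignedMeasure

section MomentMatchedPairs

/-- Two probability vectors `w true` and `w false` on the points `z` of the unit interval, with
common mean `q` and the same moments of order less than `m`. -/
structure MomentMatchedPair {ι : Type*} [Fintype ι] (w : Bool → ι → ℝ) (z : ι → ℝ) (m : ℕ)
    (q : ℝ) : Prop where
  mem_stdSimplex : ∀ b, w b ∈ stdSimplex ℝ ι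
  mem_Icc : ∀ i, z i ∈ Set.Icc 0 1
  mean : ∀ b, ∑ i, w b i * z i = q
  momentsVanish : MomentsVanish (fun i => w true i - w false i) z m

lemma sum_posPart_mul_and_sum_negPart_mul {ι : Type*} [Fintype ι] {ν f : ι → ℝ}
    (h : ∑ i, ν i * f i = 0) :
    ∑ i, (ν i)⁺ * f i = (∑ i, |ν i| * f i) / 2 ∧
      ∑ i, (ν i)⁻ * f i = (∑ i, |ν i| * f i) / 2 := by
  have hdiff : ∑ i, (ν i)⁺ * f i - ∑ i, (ν i)⁻ * f i = 0 := by
    simpa only [← Finset.sum_sub_distrib, ← sub_mul, posPart_sub_negPart] using h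
  have htotal : ∑ i, (ν i)⁺ * f i + ∑ i, (ν i)⁻ * f i = ∑ i, |ν i| * f i := by
    simp only [← Finset.sum_add_distrib, ← add_mul, posPart_add_negPart]
  constructor <;> linarith

lemma exists_momentMatchedPair_of_momentsVanish {ι : Type*} [Fintype ι] {ν x : ι → ℝ} {m : ℕ}
    {q : ℝ} (hν : MomentsVanish ν x m) (hm : 2 ≤ m) (hx : ∀ i, x i ∈ Set.Icc 0 1) (hq : q ≤ 1 / 2)
    (hmass : ∑ i, |ν i| ≤ 1 / 2) (hmean : ∑ i, |ν i| * x i ≤ q / 2) :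
    ∃ (w : Bool → Option ι → ℝ) (z : Option ι → ℝ), MomentMatchedPair w z m q ∧
      ∑ i, (w true i - w false i) * |z i - q| = ∑ i, ν i * |x i - q| := by
  set part : Bool → ι → ℝ := fun b i => if b then (ν i)⁺ else (ν i)⁻
  have hpart (b : Bool) (i : ι) : 0 ≤ part b i := by
    cases b
    exacts [negPart_nonneg _, posPart_nonneg _]
  have hsub (i : ι) : part true i - part false i = ν i := posPart_sub_negPart _
  have half_moment {k : ℕ} (hk : k < m) (b : Bool) :
      ∑ i, part b i * x i ^ k = (∑ i, |ν i| * x i ^ k) / 2 := by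
    cases b
    exacts [(sum_posPart_mul_and_sum_negPart_mul (hν k hk)).2,
      (sum_posPart_mul_and_sum_negPart_mul (hν k hk)).1]
  have half_mass (b : Bool) : ∑ i, part b i = (∑ i, |ν i|) / 2 := by
    simpa using half_moment (by omega : 0 < m) b
  have half_mean (b : Bool) : ∑ i, part b i * x i = (∑ i, |ν i| * x i) / 2 := by
    simpa using half_moment (by omega : 1 < m) b
  have hmean₀ : 0 ≤ ∑ i, |ν i| * x i :=
    Finset.sum_nonneg fun i _ => mul_nonneg (abs_nonneg _) (hx i).1
  set rest : ℝ := 1 - (∑ i, |ν i|) / 2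
  set p : ℝ := (q - (∑ i, |ν i| * x i) / 2) / rest with hp
  have hrest : 3 / 4 ≤ rest := by simp only [rest]; linarith
  have hrest₀ : 0 < rest := by linarith
  have hp_mem : p ∈ Set.Icc 0 1 :=
    ⟨div_nonneg (by linarith) hrest₀.le, (div_le_one hrest₀).2 (by linarith)⟩
  refine ⟨fun b o => o.elim rest (part b), adjoinPoint p x, ⟨fun b => ⟨?_, ?_⟩, ?_, fun b => ?_,
    fun k hk => ?_⟩, ?_⟩
  · rintro (_ | i)
    exacts [hrest₀.le, hpart b i]
  · simp only [Fintype.sum_option, Option.elim, half_mass, rest, sub_add_cancel]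
  · rintro (_ | i)
    exacts [hp_mem, hx i]
  · simp only [Fintype.sum_option, Option.elim, adjoinPoint, half_mean, hp]
    rw [mul_div_cancel₀ _ hrest₀.ne', sub_add_cancel]
  · simpa only [Fintype.sum_option, Option.elim, adjoinPoint, hsub, sub_self, zero_mul, zero_add]
      using hν k hk
  · simp only [Fintype.sum_option, Option.elim, adjoinPoint, hsub, sub_self, zero_mul, zero_add]

/-- Labels for the support of a prior built from the Chebyshev extremal points of degree `m`. -/
abbrev PriorIndex (m : ℕ) : Type := Option (Option (Option (Fin (m + 1))))

lemma exists_momentMatchedPair_node {m r : ℕ} (h : 2 * r + 1 ≤ m) :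
    ∃ (w : Bool → PriorIndex m → ℝ) (z : PriorIndex m → ℝ),
      MomentMatchedPair w z (m + 2) (node m (r + 1 / 2)) ∧
      1 / 10 ^ 8 * (nodeAngle m * √(node m (r + 1 / 2)))
        ≤ ∑ i, (w true i - w false i) * |z i - node m (r + 1 / 2)| := by
  obtain ⟨w, z, hpair, hgap⟩ := exists_momentMatchedPair_of_momentsVanish
    ((momentsVanish_extremalWeight h).const_mul _) (by omega) (extremalPoint_mem_Icc m r)
    (node_mid_le_half h) (sum_abs_scaledExtremalWeight_le h)
    (sum_abs_scaledExtremalWeight_mul_le h)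
  exact ⟨w, z, hpair, (le_sum_scaledExtremalWeight_mul_abs_sub h).trans_eq hgap.symm⟩

end MomentMatchedPairs

section NodeSelection

variable {m : ℕ}

lemma node_mid_succ_le {r : ℕ} (h : 2 * r + 1 ≤ m) :
    node m ((r + 1 : ℕ) + 1 / 2) ≤ 180 * node m (r + 1 / 2) := by
  have hm : (2 * r + 1 : ℝ) ≤ m := by exact_mod_cast h
  have : (0 : ℝ) ≤ r := r.cast_nonneg
  calc node m ((r + 1 : ℕ) + 1 / 2) ≤ nodeAngle m ^ 2 * ((r + 1 : ℕ) + 1 / 2) ^ 2 :=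
        node_le m (by positivity)
    _ ≤ nodeAngle m ^ 2 * (9 * (r + 1 / 2) ^ 2) := by gcongr; push_cast; nlinarith
    _ = 180 * (1 / 20 * nodeAngle m ^ 2 * (r + 1 / 2) ^ 2) := by ring
    _ ≤ 180 * node m (r + 1 / 2) := by gcongr; exact le_node (by positivity) (by linarith)

lemma node_odd_mid (k : ℕ) : node (2 * k + 1) (k + 1 / 2) = 1 / 2 := by
  have hhalf := node_half (show 0 < 2 * k + 1 by omega)
  rwa [show ((2 * k + 1 : ℕ) : ℝ) / 2 = k + 1 / 2 by push_cast; ring] at hhalf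

lemma exists_node_mid_comparable (hm : Odd m) {y : ℝ} (hy : y ≤ 1 / 2) :
    ∃ r : ℕ, 2 * r + 1 ≤ m ∧ y ≤ 180 * node m (r + 1 / 2) ∧
      (r = 0 ∨ node m (r + 1 / 2) ≤ y) := by
  obtain ⟨k, rfl⟩ := hm
  obtain hall | hex := forall_or_exists_not fun r : ℕ =>
    r < k + 1 → r = 0 ∨ node (2 * k + 1) (r + 1 / 2) ≤ y
  · exact ⟨k, le_rfl, by linarith [node_odd_mid k], hall k k.lt_succ_self⟩
  · have hmin := Nat.find_spec hex
    obtain ⟨r, hr⟩ : ∃ r, Nat.find hex = r + 1 :=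
      Nat.exists_eq_succ_of_ne_zero fun h0 => hmin fun _ => Or.inl h0
    rw [hr] at hmin
    push Not at hmin
    refine ⟨r, by omega, (hmin.2.2.le).trans (node_mid_succ_le (by omega)), ?_⟩
    exact not_not.1 (Nat.find_min hex (by omega : r < Nat.find hex)) (by omega)

lemma sqrt_node_one_half_le : √(node m (1 / 2)) ≤ nodeAngle m / 2 :=
  Real.sqrt_le_iff.2 ⟨div_nonneg (nodeAngle_nonneg m) two_pos.le,
    (node_le m (by norm_num)).trans_eq (by ring)⟩

end NodeSelection

section CoordinatePriors

variable {ι : Type*} [Fintype ι]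

/-- Two priors `w true` and `w false` on the additive perturbations `u` of one coordinate `q`, with
mean zero, indistinguishable by moments of order less than `m`. The parameters `τ` and `V * q` bound
the size and the variance of the perturbation. In the chi-square comparison of the Poisson mixtures
of intensity `n`, the reference distribution is centred at `q + a`, and `T` bounds the exponent. -/
structure CoordinatePrior (m : ℕ) (n q τ V T : ℝ) (w : Bool → ι → ℝ) (u : ι → ℝ) (a : ℝ) :
    Prop where
  mem_stdSimplex : ∀ b, w b ∈ stdSimplex ℝ ι
  mean : ∀ b, ∑ i, w b i * u i = 0
  momentsVanish : MomentsVanish (fun i => w true i - w false i) u m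
  neg_half_le : ∀ i, -(q / 2) ≤ u i
  abs_le : ∀ i, |u i| ≤ τ
  second_moment_le : ∀ b, ∑ i, w b i * u i ^ 2 ≤ V * q
  center_pos : 0 < a + 3 * q / 4
  abs_center_le : |a| ≤ τ
  exponent_le : ∀ i, n * ((u i - a) ^ 2 * (1 / (a + 3 * q / 4) + 4)) ≤ T

variable {w : Bool → ι → ℝ} {z : ι → ℝ} {m : ℕ} {q : ℝ}

lemma MomentMatchedPair.sum_mul_sq_sub_le (h : MomentMatchedPair w z m q) (b : Bool) :
    ∑ i, w b i * (z i - q) ^ 2 ≤ q := by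
  have hsq : ∑ i, w b i * z i ^ 2 ≤ ∑ i, w b i * z i :=
    Finset.sum_le_sum fun i _ => mul_le_mul_of_nonneg_left
      (pow_le_of_le_one (h.mem_Icc i).1 (h.mem_Icc i).2 two_ne_zero) ((h.mem_stdSimplex b).1 i)
  calc ∑ i, w b i * (z i - q) ^ 2
      = ∑ i, w b i * z i ^ 2 - 2 * q * ∑ i, w b i * z i + q ^ 2 * ∑ i, w b i := by
        simp only [Finset.mul_sum, ← Finset.sum_sub_distrib, ← Finset.sum_add_distrib]
        exact Finset.sum_congr rfl fun i _ => by ring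
    _ ≤ q := by rw [h.mean b] at hsq ⊢; rw [(h.mem_stdSimplex b).2]; nlinarith [sq_nonneg q]

lemma MomentMatchedPair.mono (h : MomentMatchedPair w z m q) {k : ℕ} (hk : k ≤ m) :
    MomentMatchedPair w z k q :=
  ⟨h.mem_stdSimplex, h.mem_Icc, h.mean, h.momentsVanish.mono hk⟩

lemma MomentMatchedPair.mean_mem_Icc (h : MomentMatchedPair w z m q) : q ∈ Set.Icc 0 1 := by
  have hw := h.mem_stdSimplex true
  rw [← h.mean true]
  refine ⟨Finset.sum_nonneg fun i _ => mul_nonneg (hw.1 i) (h.mem_Icc i).1, ?_⟩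
  rw [← hw.2]
  exact Finset.sum_le_sum fun i _ => mul_le_of_le_one_right (hw.1 i) (h.mem_Icc i).2

lemma MomentMatchedPair.coordinatePrior (h : MomentMatchedPair w z m q) {n p τ V T M a : ℝ}
    (hM : 0 ≤ M) (hMq : M * q ≤ p / 2) (hMτ : M ≤ τ) (hV : M ^ 2 * q ≤ V * p)
    (ha : 0 < a + 3 * p / 4) (haτ : |a| ≤ τ)
    (hT : ∀ i, n * ((M * (z i - q) - a) ^ 2 * (1 / (a + 3 * p / 4) + 4)) ≤ T) :
    CoordinatePrior m n p τ V T w (fun i => M * (z i - q)) a where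
  mem_stdSimplex := h.mem_stdSimplex
  mean b := by
    simp only [mul_left_comm _ M, ← Finset.mul_sum, mul_sub, Finset.sum_sub_distrib,
      ← Finset.sum_mul, h.mean b, (h.mem_stdSimplex b).2]
    ring
  momentsVanish := by
    convert h.momentsVanish.affine M (-(M * q)) using 2
    ring
  neg_half_le i := by nlinarith [mul_nonneg hM (h.mem_Icc i).1]
  abs_le i := by
    obtain ⟨hq₀, hq₁⟩ := h.mean_mem_Icc
    obtain ⟨hz₀, hz₁⟩ := h.mem_Icc i
    rw [abs_mul, abs_of_nonneg hM]
    exact (mul_le_of_le_one_right hM (abs_le.2 ⟨by linarith, by linarith⟩)).trans hMτ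
  second_moment_le b := by
    simp only [mul_pow, mul_left_comm _ (M ^ 2), ← Finset.mul_sum]
    exact (mul_le_mul_of_nonneg_left (h.sum_mul_sq_sub_le b) (sq_nonneg M)).trans hV
  center_pos := ha
  abs_center_le := haτ
  exponent_le := hT

lemma sum_mul_abs_mul (v x : ι → ℝ) {M : ℝ} (hM : 0 ≤ M) :
    ∑ i, v i * |M * x i| = M * ∑ i, v i * |x i| := by
  simp only [abs_mul, abs_of_nonneg hM, mul_left_comm _ M, ← Finset.mul_sum]

variable {n δ : ℝ}

lemma small_coordinate_exponent_le {M p t : ℝ} (hn : 0 ≤ n) (hM : 0 < M) (hMδ : M ≤ 180 * δ)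
    (hδ : 180 * δ ≤ 1 / 4) (hp : 0 ≤ p) (ht : t ∈ Set.Icc 0 1) (hMq : M * q = p / 2) :
    n * ((M * (t - q) - (M - p / 2)) ^ 2 * (1 / (M - p / 2 + 3 * p / 4) + 4))
      ≤ 360 * (n * δ) := by
  have hsq : (M * (t - q) - (M - p / 2)) ^ 2 ≤ M ^ 2 := by
    rw [← hMq, show M * (t - q) - (M - M * q) = -(M * (1 - t)) by ring, neg_sq]
    exact pow_le_pow_left₀ (mul_nonneg hM.le (by linarith [ht.2]))
      (mul_le_of_le_one_right hM.le (by linarith [ht.1])) 2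
  calc _ ≤ n * (M ^ 2 * (1 / M + 4)) := by
        gcongr
        · exact add_nonneg (one_div_nonneg.2 (by linarith)) (by norm_num)
        · linarith
    _ = n * (M * (1 + 4 * M)) := by field_simp
    _ ≤ n * (M * 2) := by gcongr; linarith
    _ ≤ n * (180 * δ * 2) := by gcongr
    _ = 360 * (n * δ) := by ring

/-- Lower bound, up to a constant, for the contribution of a coordinate `q` to the difference
between the expected `L₁` distances under the two priors. -/
noncomputable def coordinateGap (m : ℕ) (q δ : ℝ) : ℝ :=
  1 / (2 * 10 ^ 8) * min q (nodeAngle m * √(q * δ))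

lemma coordinateGap_le_of_two_mul_sqrt_le {M p G : ℝ} (hM : 0 ≤ M) (hq : 0 ≤ q)
    (hMq : M * q = p / 2) (hsqrt : 2 * √q ≤ nodeAngle m)
    (hG : 1 / 10 ^ 8 * (nodeAngle m * √q) ≤ G) : coordinateGap m p δ ≤ M * G := by
  calc coordinateGap m p δ ≤ 1 / (2 * 10 ^ 8) * p := by
        unfold coordinateGap; gcongr; exact min_le_left _ _
    _ = M * (1 / (2 * 10 ^ 8) * (2 * √q * √q)) := by
        rw [mul_assoc 2, Real.mul_self_sqrt hq]; linear_combination -(1 / 10 ^ 8) * hMq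
    _ ≤ M * (1 / 10 ^ 8 * (nodeAngle m * √q)) := by gcongr; norm_num
    _ ≤ M * G := by gcongr

lemma coordinateGap_le {M p G : ℝ} (hM : 0 ≤ M) (hq : 0 ≤ q) (hMq : p * δ ≤ 2 * (M ^ 2 * q))
    (hG : 1 / 10 ^ 8 * (nodeAngle m * √q) ≤ G) : coordinateGap m p δ ≤ M * G := by
  have hα := nodeAngle_nonneg m
  have hsqrt : √(p * δ) ≤ 2 * (M * √q) := by
    calc √(p * δ) ≤ √((2 * M) ^ 2 * q) := by
          refine Real.sqrt_le_sqrt (hMq.trans ?_)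
          nlinarith [mul_nonneg (sq_nonneg M) hq]
      _ = 2 * (M * √q) := by
          rw [Real.sqrt_mul (by positivity), Real.sqrt_sq (by positivity), mul_assoc]
  calc coordinateGap m p δ ≤ 1 / (2 * 10 ^ 8) * (nodeAngle m * (2 * (M * √q))) := by
        unfold coordinateGap
        gcongr
        exact (min_le_right _ _).trans (by gcongr)
    _ = M * (1 / 10 ^ 8 * (nodeAngle m * √q)) := by ring
    _ ≤ M * G := by gcongr

lemma le_sqrt_of_mul_sqrt_le (hδ : 0 ≤ δ) (hδ' : 180 * √δ ≤ 1 / 4) : δ ≤ √δ := by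
  nlinarith [Real.sq_sqrt hδ, Real.sqrt_nonneg δ]

lemma exists_coordinatePrior_zero (hn : 0 ≤ n) (hδ : 0 < δ) (hδ' : 180 * √δ ≤ 1 / 4) :
    ∃ (w : Bool → PriorIndex m → ℝ) (u : PriorIndex m → ℝ) (a : ℝ),
      CoordinatePrior m n 0 (180 * √δ) (180 * δ) (360 * (n * δ)) w u a ∧
      coordinateGap m 0 δ ≤ ∑ i, (w true i - w false i) * |u i| := by
  have hδs := le_sqrt_of_mul_sqrt_le hδ.le hδ'
  refine ⟨fun _ => Pi.single none 1, fun _ => 0, δ, ?_, ?_⟩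
  · refine ⟨fun _ => single_mem_stdSimplex ℝ none, by simp, fun k _ => by simp, by simp,
      fun _ => by rw [abs_zero]; positivity, by simp, by linarith, ?_, fun _ => ?_⟩
    · rw [abs_of_pos hδ]; linarith
    · have := small_coordinate_exponent_le (δ := δ) hn hδ (by linarith) (by linarith) le_rfl
        (Set.left_mem_Icc.2 zero_le_one) (show δ * 0 = 0 / 2 by simp)
      simpa using this
  · simp [coordinateGap]

lemma exists_coordinatePrior_small (hm : Odd m) (hn : 0 ≤ n) (hδ : 0 < δ)
    (hδ' : 180 * √δ ≤ 1 / 4) {p : ℝ} (hp : 0 < p) (hpδ : p ≤ δ) :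
    ∃ (w : Bool → PriorIndex m → ℝ) (u : PriorIndex m → ℝ) (a : ℝ),
      CoordinatePrior m n p (180 * √δ) (180 * δ) (360 * (n * δ)) w u a ∧
      coordinateGap m p δ ≤ ∑ i, (w true i - w false i) * |u i| := by
  have hδs := le_sqrt_of_mul_sqrt_le hδ.le hδ'
  obtain ⟨r, hr, hy_le, hle_y⟩ := exists_node_mid_comparable hm
    (show p / (2 * δ) ≤ 1 / 2 by rw [div_le_iff₀ (by positivity)]; linarith)
  obtain ⟨w, z, hpair, hgap⟩ := exists_momentMatchedPair_node hr
  set q := node m (r + 1 / 2) with hq_def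
  have hq : 0 < q := by have := div_pos hp (show 0 < 2 * δ by positivity); linarith
  have hq_half : q ≤ 1 / 2 := node_mid_le_half hr
  set M := p / (2 * q) with hM_def
  have hM : 0 < M := by positivity
  have hMq : M * q = p / 2 := by rw [hM_def]; field_simp
  have hpM : p ≤ M := by nlinarith
  have hMδ : M ≤ 180 * δ := by
    rw [div_le_iff₀ (by positivity)] at hy_le ⊢
    linarith
  refine ⟨w, _, M - p / 2, hpair.mono (by omega) |>.coordinatePrior hM.le hMq.le (by linarith) ?_
    (by linarith) (by rw [abs_of_pos (by linarith)]; linarith) fun i =>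
      small_coordinate_exponent_le hn hM hMδ (by linarith) hp.le (hpair.mem_Icc i) hMq, ?_⟩
  · rw [sq, mul_assoc, hMq]; nlinarith
  rw [sum_mul_abs_mul _ _ hM.le]
  obtain rfl | hqy := hle_y
  · have hsqrt : 2 * √q ≤ nodeAngle m := by
      rw [hq_def, Nat.cast_zero, zero_add]
      linarith [sqrt_node_one_half_le (m := m)]
    exact coordinateGap_le_of_two_mul_sqrt_le hM.le hq.le hMq hsqrt hgap
  · refine coordinateGap_le hM.le hq.le ?_ hgap
    have hδM : δ ≤ M := by
      rw [le_div_iff₀ (by positivity)] at hqy ⊢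
      linarith
    rw [sq, mul_assoc, hMq]
    nlinarith

lemma exists_coordinatePrior_large (hm : Odd m) (hn : 0 ≤ n) (hδ : 0 < δ)
    {p : ℝ} (hδp : δ ≤ p) (hp : p ≤ 1) :
    ∃ (w : Bool → PriorIndex m → ℝ) (u : PriorIndex m → ℝ) (a : ℝ),
      CoordinatePrior m n p (180 * √δ) (180 * δ) (360 * (n * δ)) w u a ∧
      coordinateGap m p δ ≤ ∑ i, (w true i - w false i) * |u i| := by
  obtain ⟨k, rfl⟩ := hm
  obtain ⟨w, z, hpair, hgap⟩ := exists_momentMatchedPair_node (le_refl (2 * k + 1))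
  rw [node_odd_mid] at hpair hgap
  have hp₀ : 0 < p := hδ.trans_le hδp
  set M := √(p * δ)
  have hM : 0 ≤ M := Real.sqrt_nonneg _
  have hMsq : M ^ 2 = p * δ := Real.sq_sqrt (by positivity)
  have hMp : M ≤ p := Real.sqrt_le_iff.2 ⟨hp₀.le, by nlinarith⟩
  have hMδ : M ≤ √δ := Real.sqrt_le_sqrt (mul_le_of_le_one_left hδ.le hp)
  have hpδ : 0 ≤ p * δ := by positivity
  refine ⟨w, _, 0, hpair.mono (by omega) |>.coordinatePrior hM (by linarith)
    (by linarith [Real.sqrt_nonneg δ]) (by rw [hMsq]; linarith) (by linarith)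
    (by rw [abs_zero]; positivity) fun i => ?_, ?_⟩
  · have hsq : (M * (z i - 1 / 2) - 0) ^ 2 ≤ p * δ := by
      obtain ⟨hz₀, hz₁⟩ := hpair.mem_Icc i
      rw [sub_zero, mul_pow, hMsq]
      exact mul_le_of_le_one_right hpδ (by nlinarith)
    calc _ ≤ n * (p * δ * (1 / (0 + 3 * p / 4) + 4)) := by gcongr
      _ = n * δ * (4 / 3 + 4 * p) := by field_simp; ring
      _ ≤ n * δ * 360 := by gcongr; linarith
      _ = _ := by ring
  · rw [sum_mul_abs_mul _ _ hM]
    exact coordinateGap_le hM (by norm_num) (by linarith) hgap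

lemma exists_coordinatePrior (hm : Odd m) (hn : 0 ≤ n) (hδ : 0 < δ)
    (hδ' : 180 * √δ ≤ 1 / 4) {p : ℝ} (hp : p ∈ Set.Icc 0 1) :
    ∃ (w : Bool → PriorIndex m → ℝ) (u : PriorIndex m → ℝ) (a : ℝ),
      CoordinatePrior m n p (180 * √δ) (180 * δ) (360 * (n * δ)) w u a ∧
      coordinateGap m p δ ≤ ∑ i, (w true i - w false i) * |u i| := by
  obtain rfl | hp₀ := hp.1.eq_or_lt
  · exact exists_coordinatePrior_zero hn hδ hδ'
  obtain hpδ | hδp := le_total p δ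
  · exact exists_coordinatePrior_small hm hn hδ hδ' hp₀ hpδ
  · exact exists_coordinatePrior_large hm hn hδ hδp hp.2

end CoordinatePriors

section Series

lemma hasSum_mul_prod {α β : Type*} {f : α → ℝ} {g : β → ℝ} {a b : ℝ} (hf : HasSum f a)
    (hg : HasSum g b) : HasSum (fun x : α × β => f x.1 * g x.2) (a * b) :=
  hf.mul hg (summable_mul_of_summable_norm hf.summable.norm hg.summable.norm)

lemma hasSum_pi_prod {α : Type*} {S : ℕ} {f : Fin S → α → ℝ} {a : Fin S → ℝ}
    (h : ∀ k, HasSum (f k) (a k)) :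
    HasSum (fun X : Fin S → α => ∏ k, f k (X k)) (∏ k, a k) := by
  induction S with
  | zero => simp
  | succ S ih =>
    have htail := ih (f := fun k => f k.succ) fun k => h k.succ
    have hprod := hasSum_mul_prod (h 0) htail
    rw [← (Fin.consEquiv fun _ : Fin (S + 1) => α).hasSum_iff, Fin.prod_univ_succ]
    refine (congrArg (HasSum · _) (funext fun x => ?_)).mp hprod
    simp [Fin.consEquiv, Fin.prod_univ_succ]

lemma tsum_enorm_mul_le_of_hasSum_sq {α : Type*} {ρ f : α → ℝ} {D η : ℝ} (hρ : ∀ x, 0 ≤ ρ x)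
    (hsum : HasSum ρ 1) (hsq : HasSum (fun x => ρ x * f x ^ 2) D) (hη : 0 < η) (hD : D ≤ η ^ 2) :
    ∑' x, ‖ρ x * f x‖ₑ ≤ ENNReal.ofReal η := by
  have hbound := (hsum.mul_left (η / 2)).add (hsq.mul_left (1 / (2 * η)))
  have amgm (x : α) : |ρ x * f x| ≤ η / 2 * ρ x + 1 / (2 * η) * (ρ x * f x ^ 2) := by
    rw [abs_mul, abs_of_nonneg (hρ x), ← sq_abs (f x)]
    have : η / 2 * ρ x + 1 / (2 * η) * (ρ x * |f x| ^ 2) - ρ x * |f x|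
        = ρ x * ((η - |f x|) ^ 2 / (2 * η)) := by field_simp; ring
    have : 0 ≤ ρ x * ((η - |f x|) ^ 2 / (2 * η)) := mul_nonneg (hρ x) (by positivity)
    linarith
  calc ∑' x, ‖ρ x * f x‖ₑ
      ≤ ∑' x, ENNReal.ofReal (η / 2 * ρ x + 1 / (2 * η) * (ρ x * f x ^ 2)) :=
        ENNReal.tsum_le_tsum fun x => by
          rw [Real.enorm_eq_ofReal_abs]
          exact ENNReal.ofReal_le_ofReal (amgm x)
    _ = ENNReal.ofReal (η / 2 * 1 + 1 / (2 * η) * D) := by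
        rw [← ENNReal.ofReal_tsum_of_nonneg (fun x => (abs_nonneg _).trans (amgm x))
          hbound.summable, hbound.tsum_eq]
    _ ≤ ENNReal.ofReal η := by
        refine ENNReal.ofReal_le_ofReal ?_
        calc η / 2 * 1 + 1 / (2 * η) * D ≤ η / 2 * 1 + 1 / (2 * η) * η ^ 2 := by gcongr
          _ = η := by field_simp; ring

lemma tsum_enorm_sum_mul_le {ι α : Type*} [Fintype ι] (c : ι → ℝ) (F : ι → α → ℝ) :
    ∑' x, ‖∑ i, c i * F i x‖ₑ ≤ ∑ i, ‖c i‖ₑ * ∑' x, ‖F i x‖ₑ := by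
  calc ∑' x, ‖∑ i, c i * F i x‖ₑ ≤ ∑' x, ∑ i, ‖c i‖ₑ * ‖F i x‖ₑ :=
        ENNReal.tsum_le_tsum fun x => (enorm_sum_le _ _).trans_eq <|
          Finset.sum_congr rfl fun i _ => enorm_mul _ _
    _ = ∑ i, ‖c i‖ₑ * ∑' x, ‖F i x‖ₑ := by
        rw [Summable.tsum_finsetSum fun _ _ => ENNReal.summable]
        exact Finset.sum_congr rfl fun i _ => ENNReal.tsum_mul_left

lemma hasSum_exp (y : ℝ) : HasSum (fun k : ℕ => y ^ k / k.factorial) (Real.exp y) := by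
  rw [Real.exp_eq_exp_ℝ]
  exact NormedSpace.expSeries_div_hasSum_exp y

lemma exp_le_sum_range_add {y : ℝ} (hy : 0 ≤ y) (m : ℕ) :
    Real.exp y ≤ ∑ k ∈ Finset.range m, y ^ k / k.factorial + Real.exp (3 * y - m) := by
  have hhead : HasSum (fun k => if k ∈ Finset.range m then y ^ k / k.factorial else 0)
      (∑ k ∈ Finset.range m, if k ∈ Finset.range m then y ^ k / k.factorial else 0) :=
    hasSum_sum_of_ne_finset_zero fun k hk => if_neg hk
  have htail := (hasSum_exp (Real.exp 1 * y)).mul_left (Real.exp (-m))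
  rw [Finset.sum_congr rfl fun k hk => if_pos hk] at hhead
  calc Real.exp y ≤ _ := by
        refine hasSum_le (fun k => ?_) (hasSum_exp y) (hhead.add htail)
        split_ifs with hk
        · exact le_add_of_nonneg_right (by positivity)
        · have hmk : (m : ℝ) ≤ k := by exact_mod_cast not_lt.1 (mt Finset.mem_range.2 hk)
          have hfactor : 1 ≤ Real.exp (-m) * Real.exp 1 ^ k := by
            rw [← Real.exp_nat_mul, ← Real.exp_add]
            exact Real.one_le_exp (by linarith)
          calc y ^ k / k.factorial ≤ Real.exp (-m) * Real.exp 1 ^ k * (y ^ k / k.factorial) :=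
                le_mul_of_one_le_left (by positivity) hfactor
            _ = 0 + Real.exp (-m) * ((Real.exp 1 * y) ^ k / k.factorial) := by ring
    _ ≤ _ := by
        rw [← Real.exp_add]
        gcongr
        linarith [mul_le_mul_of_nonneg_right Real.exp_one_lt_three.le hy]

lemma abs_exp_sub_sum_range_le {y T : ℝ} (hy : |y| ≤ T) (m : ℕ) :
    |Real.exp y - ∑ k ∈ Finset.range m, y ^ k / k.factorial| ≤ Real.exp (3 * T - m) := by
  have hcomplex := Complex.norm_exp_sub_sum_le_exp_norm_sub_sum (y : ℂ) m
  rw [Complex.norm_real, Real.norm_eq_abs] at hcomplex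
  calc _ ≤ Real.exp |y| - ∑ k ∈ Finset.range m, |y| ^ k / k.factorial := by
        refine le_trans (le_of_eq ?_) hcomplex
        rw [← Real.norm_eq_abs, ← Complex.norm_real]
        push_cast
        rfl
    _ ≤ Real.exp (3 * |y| - m) := by linarith [exp_le_sum_range_add (abs_nonneg y) m]
    _ ≤ Real.exp (3 * T - m) := by gcongr

end Series

section ExponentialKernel

variable {ι : Type*} [Fintype ι] {v s : ι → ℝ} {m : ℕ}

lemma MomentsVanish.sum_sum_mul_pow (h : MomentsVanish v s m) (Γ : ℝ) {k : ℕ} (hk : k < m) :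
    ∑ i, ∑ j, v i * v j * (s i * s j * Γ) ^ k = 0 := by
  calc ∑ i, ∑ j, v i * v j * (s i * s j * Γ) ^ k
      = (∑ i, v i * s i ^ k) * ∑ j, v j * s j ^ k * Γ ^ k := by
        rw [Finset.sum_mul_sum]
        exact Finset.sum_congr rfl fun i _ => Finset.sum_congr rfl fun j _ => by ring
    _ = 0 := by rw [h k hk, zero_mul]

lemma MomentsVanish.sum_sum_mul_exp_le (h : MomentsVanish v s m) {Γ T : ℝ} (hΓ : 0 ≤ Γ)
    (hT : ∀ i, s i ^ 2 * Γ ≤ T) :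
    ∑ i, ∑ j, v i * v j * Real.exp (s i * s j * Γ)
      ≤ (∑ i, |v i|) ^ 2 * Real.exp (3 * T - m) := by
  have harg (i j : ι) : |s i * s j * Γ| ≤ T := by
    rw [abs_mul, abs_of_nonneg hΓ]
    have hprod : |s i * s j| ≤ (s i ^ 2 + s j ^ 2) / 2 :=
      abs_le.2 ⟨by nlinarith [sq_nonneg (s i + s j)], by nlinarith [sq_nonneg (s i - s j)]⟩
    calc |s i * s j| * Γ ≤ (s i ^ 2 + s j ^ 2) / 2 * Γ := by gcongr
      _ ≤ T := by linarith [hT i, hT j]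
  have hpoly : ∑ i, ∑ j, v i * v j * ∑ k ∈ Finset.range m, (s i * s j * Γ) ^ k / k.factorial
      = 0 := by
    simp only [Finset.mul_sum, mul_div_assoc', Finset.sum_comm (t := Finset.range m),
      ← Finset.sum_div]
    exact Finset.sum_eq_zero fun k hk => by
      rw [h.sum_sum_mul_pow Γ (Finset.mem_range.1 hk), zero_div]
  calc ∑ i, ∑ j, v i * v j * Real.exp (s i * s j * Γ)
      = ∑ i, ∑ j, v i * v j * (Real.exp (s i * s j * Γ)
          - ∑ k ∈ Finset.range m, (s i * s j * Γ) ^ k / k.factorial) := by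
        simp only [mul_sub, Finset.sum_sub_distrib, hpoly, sub_zero]
    _ ≤ ∑ i, ∑ j, |v i| * |v j| * Real.exp (3 * T - m) := by
        refine Finset.sum_le_sum fun i _ => Finset.sum_le_sum fun j _ => (le_abs_self _).trans ?_
        rw [abs_mul, abs_mul]
        gcongr
        exact abs_exp_sub_sum_range_le (harg i j) m
    _ = (∑ i, |v i|) ^ 2 * Real.exp (3 * T - m) := by
        rw [sq, Finset.sum_mul_sum]
        simp only [Finset.sum_mul]

end ExponentialKernel

section Poisson

lemma poissonPMF_nonneg {lam : ℝ} (h : 0 ≤ lam) (k : ℕ) : 0 ≤ poissonPMF lam k := by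
  unfold poissonPMF; positivity

/-- The likelihood ratio of `Poisson(μ)` to `Poisson(lam)`; for `lam = 0` it is meaningful only if
`μ = 0`. -/
noncomputable def poissonRatio (lam μ : ℝ) (k : ℕ) : ℝ := Real.exp (lam - μ) * (μ / lam) ^ k

lemma poissonPMF_mul_poissonRatio {lam μ : ℝ} (h : lam = 0 → μ = 0) (k : ℕ) :
    poissonPMF lam k * poissonRatio lam μ k = poissonPMF μ k := by
  have hμ : lam * (μ / lam) = μ := mul_div_cancel_of_imp' h
  calc poissonPMF lam k * poissonRatio lam μ k
      = Real.exp (-lam) * Real.exp (lam - μ) * (lam * (μ / lam)) ^ k / k.factorial := by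
        rw [poissonPMF, poissonRatio, mul_pow]; ring
    _ = poissonPMF μ k := by rw [← Real.exp_add, hμ, poissonPMF]; ring_nf

lemma hasSum_poissonPMF_mul_poissonRatio_mul {lam μ ν : ℝ} (hμ : lam = 0 → μ = 0)
    (hν : lam = 0 → ν = 0) :
    HasSum (fun k => poissonPMF lam k * (poissonRatio lam μ k * poissonRatio lam ν k))
      (Real.exp ((μ - lam) * (ν - lam) / lam)) := by
  have hexp : lam - μ - ν + μ * (ν / lam) = (μ - lam) * (ν - lam) / lam := by
    obtain rfl | hlam := eq_or_ne lam 0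
    · simp [hμ, hν]
    · field_simp; ring
  have h := (hasSum_exp (μ * (ν / lam))).mul_left (Real.exp (lam - μ - ν))
  rw [← Real.exp_add, hexp] at h
  refine (congrArg (HasSum · _) (funext fun k => ?_)).mp h
  rw [← mul_assoc, poissonPMF_mul_poissonRatio hμ, poissonPMF, poissonRatio, mul_pow,
    show lam - μ - ν = -μ + (lam - ν) by ring, Real.exp_add]
  ring

/-- The likelihood ratio of the Poisson sampling model at `r` to the one at `p`. -/
noncomputable def prodRatio {S : ℕ} (n : ℕ) (p r : Fin S → ℝ) (X : Fin S → ℕ) : ℝ :=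
  ∏ k, poissonRatio (n * p k) (n * r k) (X k)

variable {S n : ℕ} {p r r' : Fin S → ℝ}

lemma prodPMF_nonneg (hp : ∀ k, 0 ≤ p k) (X : Fin S → ℕ) : 0 ≤ prodPMF n p X :=
  Finset.prod_nonneg fun k _ => poissonPMF_nonneg (mul_nonneg n.cast_nonneg (hp k)) _

lemma hasSum_poissonPMF (lam : ℝ) : HasSum (poissonPMF lam) 1 := by
  have h := (hasSum_exp lam).mul_left (Real.exp (-lam))
  rw [← Real.exp_add, neg_add_cancel, Real.exp_zero] at h
  exact (congrArg (HasSum · _) (funext fun k => (mul_div_assoc ..).symm)).mp h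

lemma hasSum_prodPMF (n : ℕ) (p : Fin S → ℝ) : HasSum (prodPMF n p) 1 := by
  rw [← Finset.prod_const_one (s := (Finset.univ : Finset (Fin S)))]
  exact hasSum_pi_prod fun k => hasSum_poissonPMF (n * p k)

lemma tsum_enorm_prodPMF (hp : ∀ k, 0 ≤ p k) : ∑' X, ‖prodPMF n p X‖ₑ = 1 := by
  simp only [Real.enorm_eq_ofReal (prodPMF_nonneg hp _)]
  rw [← ENNReal.ofReal_tsum_of_nonneg (prodPMF_nonneg hp) (hasSum_prodPMF n p).summable,
    (hasSum_prodPMF n p).tsum_eq, ENNReal.ofReal_one]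

lemma mul_eq_zero_of_mul_eq_zero {a b c : ℝ} (h : b = 0 → c = 0) (hab : a * b = 0) : a * c = 0 :=
  (mul_eq_zero.1 hab).elim (fun ha => by rw [ha, zero_mul]) fun hb => by rw [h hb, mul_zero]

lemma prodPMF_mul_prodRatio (h : ∀ k, p k = 0 → r k = 0) (X : Fin S → ℕ) :
    prodPMF n p X * prodRatio n p r X = prodPMF n r X := by
  rw [prodPMF, prodRatio, prodPMF, ← Finset.prod_mul_distrib]
  exact Finset.prod_congr rfl fun k _ =>
    poissonPMF_mul_poissonRatio (mul_eq_zero_of_mul_eq_zero (h k)) _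

lemma hasSum_prodPMF_mul_prodRatio_mul (h : ∀ k, p k = 0 → r k = 0)
    (h' : ∀ k, p k = 0 → r' k = 0) :
    HasSum (fun X => prodPMF n p X * (prodRatio n p r X * prodRatio n p r' X))
      (Real.exp (n * ∑ k, (r k - p k) * (r' k - p k) / p k)) := by
  have hprod := hasSum_pi_prod fun k => hasSum_poissonPMF_mul_poissonRatio_mul
    (mul_eq_zero_of_mul_eq_zero (a := n) (h k)) (mul_eq_zero_of_mul_eq_zero (a := n) (h' k))
  rw [← Real.exp_sum] at hprod
  refine (congrArg₂ (HasSum · ·) (funext fun X => ?_) ?_).mp hprod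
  · rw [prodPMF, prodRatio, prodRatio, ← Finset.prod_mul_distrib, ← Finset.prod_mul_distrib]
  · rw [Finset.mul_sum]
    refine congrArg Real.exp (Finset.sum_congr rfl fun k _ => ?_)
    obtain hn | hn := eq_or_ne (n : ℝ) 0
    · simp [hn]
    · rw [← mul_sub, ← mul_sub, mul_mul_mul_comm, mul_assoc, mul_div_mul_left _ _ hn,
        mul_div_assoc']

lemma hasSum_prodPMF_mul_sum_prodRatio_sq {ι : Type*} [Fintype ι] {d : Fin S → ℝ}
    (hd : ∀ k, p k = 0 → d k = 0) (v s : ι → ℝ) :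
    HasSum (fun X => prodPMF n p X * (∑ i, v i * prodRatio n p (fun k => p k + s i * d k) X) ^ 2)
      (∑ i, ∑ j, v i * v j * Real.exp (s i * s j * (n * ∑ k, d k ^ 2 / p k))) := by
  have hline (i : ι) (k : Fin S) (hk : p k = 0) : p k + s i * d k = 0 := by
    rw [hk, hd k hk, mul_zero, zero_add]
  have hpair (i j : ι) := hasSum_prodPMF_mul_prodRatio_mul (n := n) (hline i) (hline j)
  have h := hasSum_sum fun i (_ : i ∈ Finset.univ) =>
    hasSum_sum fun j (_ : j ∈ Finset.univ) => (hpair i j).mul_left (v i * v j)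
  refine (congrArg₂ (HasSum · ·) (funext fun X => ?_) ?_).mp h
  · rw [sq, Finset.sum_mul_sum, Finset.mul_sum]
    refine Finset.sum_congr rfl fun i _ => ?_
    rw [Finset.mul_sum]
    exact Finset.sum_congr rfl fun j _ => by ring
  · refine Finset.sum_congr rfl fun i _ => Finset.sum_congr rfl fun j _ => ?_
    simp only [add_sub_cancel_left, Finset.mul_sum]
    exact congrArg (fun y => v i * v j * Real.exp y) (Finset.sum_congr rfl fun k _ => by ring)

lemma tsum_enorm_sum_mul_prodPMF_le {ι : Type*} [Fintype ι] {v s : ι → ℝ} {d : Fin S → ℝ}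
    {m : ℕ} {T : ℝ} (hp : ∀ k, 0 ≤ p k) (hd : ∀ k, p k = 0 → d k = 0)
    (hmom : MomentsVanish v s m) (hv : ∑ i, |v i| ≤ 2)
    (hT : ∀ i, s i ^ 2 * (n * ∑ k, d k ^ 2 / p k) ≤ T) :
    ∑' X, ‖∑ i, v i * prodPMF n (fun k => p k + s i * d k) X‖ₑ
      ≤ ENNReal.ofReal (2 * Real.exp ((3 * T - m) / 2)) := by
  have hΓ : 0 ≤ n * ∑ k, d k ^ 2 / p k :=
    mul_nonneg n.cast_nonneg (Finset.sum_nonneg fun k _ => div_nonneg (sq_nonneg _) (hp k))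
  have hfactor (X : Fin S → ℕ) : ∑ i, v i * prodPMF n (fun k => p k + s i * d k) X
      = prodPMF n p X * ∑ i, v i * prodRatio n p (fun k => p k + s i * d k) X := by
    rw [Finset.mul_sum]
    refine Finset.sum_congr rfl fun i _ => ?_
    rw [mul_left_comm, prodPMF_mul_prodRatio fun k hk => by rw [hk, hd k hk, mul_zero, zero_add]]
  simp only [hfactor]
  refine tsum_enorm_mul_le_of_hasSum_sq (prodPMF_nonneg hp) (hasSum_prodPMF n p)
    (hasSum_prodPMF_mul_sum_prodRatio_sq hd v s) (by positivity) ?_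
  calc _ ≤ (∑ i, |v i|) ^ 2 * Real.exp (3 * T - m) := hmom.sum_sum_mul_exp_le hΓ hT
    _ ≤ 2 ^ 2 * Real.exp (3 * T - m) := by gcongr
    _ = (2 * Real.exp ((3 * T - m) / 2)) ^ 2 := by
        rw [mul_pow, ← Real.exp_nat_mul, Nat.cast_ofNat, mul_div_cancel₀ _ two_ne_zero]

end Poisson

section ProductWeights

variable {κ ι : Type*} [Fintype κ]

/-- The product of the weights `W k`: the joint law of independent draws from them. -/
def prodWeight (W : κ → ι → ℝ) (x : κ → ι) : ℝ := ∏ k, W k (x k)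

lemma prodWeight_update_mul [DecidableEq κ] (W : κ → ι → ℝ) (j : κ) (v : ι → ℝ) (x : κ → ι)
    (i : ι) :
    prodWeight (Function.update W j v) (Function.update x j i) * W j (x j)
      = prodWeight W x * v i := by
  have hoff : ∏ k ∈ Finset.univ.erase j, Function.update W j v k (Function.update x j i k)
      = ∏ k ∈ Finset.univ.erase j, W k (x k) := Finset.prod_congr rfl fun k hk => by
    rw [Function.update_of_ne (Finset.ne_of_mem_erase hk),
      Function.update_of_ne (Finset.ne_of_mem_erase hk)]
  rw [prodWeight, prodWeight, ← Finset.mul_prod_erase _ _ (Finset.mem_univ j), hoff,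
    ← Finset.mul_prod_erase _ (fun k => W k (x k)) (Finset.mem_univ j), Function.update_self,
    Function.update_self]
  ring

variable [DecidableEq κ] [Fintype ι] {W g : κ → ι → ℝ}

lemma sum_prodWeight_mul_prod (W g : κ → ι → ℝ) :
    ∑ x, prodWeight W x * ∏ k, g k (x k) = ∏ k, ∑ i, W k i * g k i := by
  rw [Finset.prod_univ_sum, Fintype.piFinset_univ]
  exact Finset.sum_congr rfl fun x _ => Finset.prod_mul_distrib.symm

lemma prodWeight_mem_stdSimplex (hW : ∀ k, W k ∈ stdSimplex ℝ ι) :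
    prodWeight W ∈ stdSimplex ℝ (κ → ι) := by
  refine ⟨fun x => Finset.prod_nonneg fun k _ => (hW k).1 _, ?_⟩
  simpa only [Finset.prod_const_one, mul_one, (hW _).2] using
    sum_prodWeight_mul_prod W fun _ _ => 1

lemma sum_prodWeight_update_mul {j : κ} (hW : ∑ i, W j i = 1) (v : ι → ℝ) (F : (κ → ι) → ℝ) :
    ∑ x, prodWeight (Function.update W j v) x * F x
      = ∑ x, prodWeight W x * ∑ i, v i * F (Function.update x j i) := by
  let swap (y : (κ → ι) × ι) : (κ → ι) × ι := (Function.update y.1 j y.2, y.1 j)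
  have hswap : Function.Involutive swap := fun ⟨x, i⟩ => by simp [swap]
  calc ∑ x, prodWeight (Function.update W j v) x * F x
      = ∑ y : (κ → ι) × ι, prodWeight (Function.update W j v) y.1 * W j y.2 * F y.1 := by
        rw [Fintype.sum_prod_type]
        refine Finset.sum_congr rfl fun x _ => ?_
        simp only [← Finset.sum_mul, ← Finset.mul_sum, hW, mul_one]
    _ = ∑ y : (κ → ι) × ι, prodWeight W y.1 * v y.2 * F (Function.update y.1 j y.2) := by
        rw [← Equiv.sum_comp hswap.toPerm]
        exact Finset.sum_congr rfl fun y _ => congrArg (· * _) (prodWeight_update_mul W j v y.1 y.2)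
    _ = ∑ x, prodWeight W x * ∑ i, v i * F (Function.update x j i) := by
        rw [Fintype.sum_prod_type]
        simp only [Finset.mul_sum, mul_assoc]

lemma sum_prodWeight_mul_eq_resample {j : κ} (hW : ∑ i, W j i = 1) (F : (κ → ι) → ℝ) :
    ∑ x, prodWeight W x * F x
      = ∑ x, prodWeight W x * ∑ i, W j i * F (Function.update x j i) := by
  rw [← sum_prodWeight_update_mul hW, Function.update_eq_self]

lemma sum_prodWeight_mul_eval (hW : ∀ k, W k ∈ stdSimplex ℝ ι) (j : κ) (f : ι → ℝ) :
    ∑ x, prodWeight W x * f (x j) = ∑ i, W j i * f i := by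
  rw [sum_prodWeight_mul_eq_resample (hW j).2]
  simp only [Function.update_self]
  rw [← Finset.sum_mul, (prodWeight_mem_stdSimplex hW).2, one_mul]

lemma sum_prodWeight_mul_eval_mul_eval_of_ne {j k : κ} (hW : ∑ i, W j i = 1)
    (hg : ∑ i, W j i * g j i = 0) (hjk : j ≠ k) :
    ∑ x, prodWeight W x * (g j (x j) * g k (x k)) = 0 := by
  rw [sum_prodWeight_mul_eq_resample hW]
  simp only [Function.update_self, Function.update_of_ne hjk.symm, ← mul_assoc, ← Finset.sum_mul]
  simp only [hg, zero_mul, mul_zero, Finset.sum_const_zero]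

lemma sum_prodWeight_mul_sum_sq (hW : ∀ k, W k ∈ stdSimplex ℝ ι)
    (hg : ∀ k, ∑ i, W k i * g k i = 0) :
    ∑ x, prodWeight W x * (∑ k, g k (x k)) ^ 2 = ∑ k, ∑ i, W k i * g k i ^ 2 := by
  calc ∑ x, prodWeight W x * (∑ k, g k (x k)) ^ 2
      = ∑ j, ∑ k, ∑ x, prodWeight W x * (g j (x j) * g k (x k)) := by
        simp only [sq, Finset.sum_mul_sum]
        simp only [Finset.mul_sum]
        rw [Finset.sum_comm]
        exact Finset.sum_congr rfl fun j _ => Finset.sum_comm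
    _ = ∑ j, ∑ x, prodWeight W x * (g j (x j)) ^ 2 := by
        refine Finset.sum_congr rfl fun j _ => ?_
        rw [Finset.sum_eq_single j
          (fun k _ hk => sum_prodWeight_mul_eval_mul_eval_of_ne (hW j).2 (hg j) hk.symm)
          (fun hj => absurd (Finset.mem_univ j) hj)]
        simp only [sq]
    _ = ∑ k, ∑ i, W k i * g k i ^ 2 :=
        Finset.sum_congr rfl fun j _ => sum_prodWeight_mul_eval hW j fun i => g j i ^ 2

lemma sum_mul_exp_le {w f : ι → ℝ} (hw : w ∈ stdSimplex ℝ ι) (hmean : ∑ i, w i * f i = 0)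
    {θ : ℝ} (hf : ∀ i, |θ * f i| ≤ 1) :
    ∑ i, w i * Real.exp (θ * f i) ≤ Real.exp (θ ^ 2 * ∑ i, w i * f i ^ 2) := by
  calc ∑ i, w i * Real.exp (θ * f i)
      ≤ ∑ i, w i * (1 + θ * f i + (θ * f i) ^ 2) := by
        gcongr with i
        · exact hw.1 i
        · linarith [(abs_le.1 (Real.abs_exp_sub_one_sub_id_le (hf i))).2]
    _ = ∑ i, (w i + θ * (w i * f i) + θ ^ 2 * (w i * f i ^ 2)) :=
        Finset.sum_congr rfl fun i _ => by ring
    _ = θ ^ 2 * ∑ i, w i * f i ^ 2 + 1 := by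
        rw [Finset.sum_add_distrib, Finset.sum_add_distrib, ← Finset.mul_sum, ← Finset.mul_sum,
          hw.2, hmean]
        ring
    _ ≤ Real.exp (θ ^ 2 * ∑ i, w i * f i ^ 2) := Real.add_one_le_exp _

lemma sum_prodWeight_mul_exp_le (hW : ∀ k, W k ∈ stdSimplex ℝ ι)
    (hg : ∀ k, ∑ i, W k i * g k i = 0) {θ V : ℝ} (hθ : ∀ k i, |θ * g k i| ≤ 1)
    (hV : ∑ k, ∑ i, W k i * g k i ^ 2 ≤ V) :
    ∑ x, prodWeight W x * Real.exp (θ * ∑ k, g k (x k)) ≤ Real.exp (θ ^ 2 * V) := by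
  calc ∑ x, prodWeight W x * Real.exp (θ * ∑ k, g k (x k))
      = ∏ k, ∑ i, W k i * Real.exp (θ * g k i) := by
        simp only [Finset.mul_sum, Real.exp_sum]
        exact sum_prodWeight_mul_prod W fun k i => Real.exp (θ * g k i)
    _ ≤ ∏ k, Real.exp (θ ^ 2 * ∑ i, W k i * g k i ^ 2) :=
        Finset.prod_le_prod
          (fun k _ => Finset.sum_nonneg fun i _ => mul_nonneg ((hW k).1 i) (Real.exp_pos _).le)
          fun k _ => sum_mul_exp_le (hW k) (hg k) (hθ k)
    _ ≤ Real.exp (θ ^ 2 * V) := by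
        rw [← Real.exp_sum, ← Finset.mul_sum]
        gcongr

lemma sum_prodWeight_lt_abs_le (hW : ∀ k, W k ∈ stdSimplex ℝ ι)
    (hg : ∀ k, ∑ i, W k i * g k i = 0) {θ V t : ℝ} (hθ : 0 ≤ θ) (hθg : ∀ k i, |θ * g k i| ≤ 1)
    (hV : ∑ k, ∑ i, W k i * g k i ^ 2 ≤ V) :
    ∑ x with t < |∑ k, g k (x k)|, prodWeight W x ≤ 2 * Real.exp (θ ^ 2 * V - θ * t) := by
  have hw0 := (prodWeight_mem_stdSimplex hW).1
  have hup := sum_prodWeight_mul_exp_le hW hg hθg hV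
  have hdown := sum_prodWeight_mul_exp_le (θ := -θ) hW hg (by simpa only [neg_mul, abs_neg]) hV
  rw [neg_sq] at hdown
  have markov (x : κ → ι) (hx : t < |∑ k, g k (x k)|) : Real.exp (θ * t)
      ≤ Real.exp (θ * ∑ k, g k (x k)) + Real.exp (-θ * ∑ k, g k (x k)) := by
    calc Real.exp (θ * t) ≤ Real.exp |θ * ∑ k, g k (x k)| := by
          rw [abs_mul, abs_of_nonneg hθ]
          gcongr
      _ ≤ _ := by rw [neg_mul]; exact Real.exp_abs_le _
  have hscaled : Real.exp (θ * t) * ∑ x with t < |∑ k, g k (x k)|, prodWeight W x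
      ≤ 2 * Real.exp (θ ^ 2 * V) := by
    calc _ ≤ ∑ x with t < |∑ k, g k (x k)|, prodWeight W x *
            (Real.exp (θ * ∑ k, g k (x k)) + Real.exp (-θ * ∑ k, g k (x k))) := by
          rw [Finset.mul_sum]
          refine Finset.sum_le_sum fun x hx => ?_
          rw [mul_comm]
          exact mul_le_mul_of_nonneg_left (markov x (Finset.mem_filter.1 hx).2) (hw0 x)
      _ ≤ ∑ x, prodWeight W x *
            (Real.exp (θ * ∑ k, g k (x k)) + Real.exp (-θ * ∑ k, g k (x k))) :=
          Finset.sum_le_sum_of_subset_of_nonneg (Finset.filter_subset _ _) fun x _ _ =>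
            mul_nonneg (hw0 x) (by positivity)
      _ ≤ 2 * Real.exp (θ ^ 2 * V) := by
          simp only [mul_add, Finset.sum_add_distrib]
          linarith
  rw [Real.exp_sub, ← mul_div_assoc, le_div_iff₀' (Real.exp_pos _)]
  exact hscaled

end ProductWeights

section Perturbation

variable {S : ℕ} {q y : Fin S → ℝ} {j : Fin S}

/-- The probability vector obtained from `q` by adding `y` and removing the excess mass `∑ k, y k`
proportionally to `q`. When the excess exceeds `1/4` the perturbation is dropped, so that the result
is always a probability vector. -/
noncomputable def perturb (q y : Fin S → ℝ) : Fin S → ℝ :=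
  if |∑ k, y k| ≤ 1 / 4 then fun k => q k * (1 - ∑ k, y k) + y k else q

lemma isDist_perturb (hq : IsDist q) (hy : ∀ k, -(q k / 2) ≤ y k) : IsDist (perturb q y) := by
  unfold perturb
  split_ifs with hsum
  · refine ⟨fun k => ?_, ?_⟩
    · nlinarith [hq.1 k, hy k, (abs_le.1 hsum).2]
    · rw [Finset.sum_add_distrib, ← Finset.sum_mul, hq.2]
      ring
  · exact hq

lemma add_le_perturb_apply {k : Fin S} (hq : 0 ≤ q k) (hsum : |∑ k, y k| ≤ 1 / 4) :
    y k + 3 * q k / 4 ≤ perturb q y k := by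
  rw [perturb, if_pos hsum]
  nlinarith [(abs_le.1 hsum).2]

lemma sum_update (y : Fin S → ℝ) (j : Fin S) (t : ℝ) :
    ∑ k, Function.update y j t k = ∑ k, y k - y j + t := by
  rw [Finset.sum_update_of_mem (Finset.mem_univ j), Finset.sdiff_singleton_eq_erase,
    ← Finset.add_sum_erase _ y (Finset.mem_univ j)]
  ring

lemma abs_sum_update_le {t : ℝ} (hsum : |∑ k, y k| ≤ 1 / 8) (hj : |y j| ≤ 1 / 16)
    (ht : |t| ≤ 1 / 16) : |∑ k, Function.update y j t k| ≤ 1 / 4 := by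
  rw [sum_update]
  rw [abs_le] at *
  constructor <;> linarith

lemma perturb_update {a t : ℝ} (ha : |∑ k, Function.update y j a k| ≤ 1 / 4)
    (ht : |∑ k, Function.update y j t k| ≤ 1 / 4) :
    perturb q (Function.update y j t) = fun k =>
      perturb q (Function.update y j a) k
        + (t - a) * (Pi.single (M := fun _ => ℝ) j 1 k - q k) := by
  funext k
  rw [perturb, perturb, if_pos ha, if_pos ht, sum_update, sum_update]
  obtain rfl | hk := eq_or_ne k j
  · simp only [Function.update_self, Pi.single_eq_same]
    ring
  · simp only [Function.update_of_ne hk, Pi.single_eq_of_ne hk]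
    ring

lemma IsDist.apply_le_one (hq : IsDist q) (k : Fin S) : q k ≤ 1 :=
  hq.2 ▸ Finset.single_le_sum (fun i _ => hq.1 i) (Finset.mem_univ k)

lemma sum_single_sub_sq_div_le (hq : IsDist q) {r : Fin S → ℝ} {ρ : ℝ} (hρ : 0 < ρ)
    (hj : ρ ≤ r j) (hr : ∀ k, k ≠ j → q k / 4 ≤ r k) :
    ∑ k, (Pi.single (M := fun _ => ℝ) j 1 k - q k) ^ 2 / r k ≤ 1 / ρ + 4 := by
  rw [← Finset.add_sum_erase _ _ (Finset.mem_univ j), Pi.single_eq_same]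
  refine add_le_add (div_le_div₀ zero_le_one ?_ hρ hj) ?_
  · nlinarith [hq.1 j, hq.apply_le_one j]
  · calc ∑ k ∈ Finset.univ.erase j, (Pi.single (M := fun _ => ℝ) j 1 k - q k) ^ 2 / r k
        ≤ ∑ k ∈ Finset.univ.erase j, 4 * q k := by
          refine Finset.sum_le_sum fun k hk => ?_
          have hkj := Finset.ne_of_mem_erase hk
          have hrk : 0 ≤ r k := (div_nonneg (hq.1 k) zero_le_four).trans (hr k hkj)
          rw [Pi.single_eq_of_ne hkj, zero_sub, neg_sq]
          refine div_le_of_le_mul₀ hrk (mul_nonneg zero_le_four (hq.1 k)) ?_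
          nlinarith [hq.1 k, hr k hkj]
      _ ≤ ∑ k, 4 * q k := Finset.sum_le_sum_of_subset_of_nonneg (Finset.erase_subset _ _)
          fun k _ _ => mul_nonneg zero_le_four (hq.1 k)
      _ = 4 := by rw [← Finset.mul_sum, hq.2, mul_one]

lemma abs_L1dist_sub_sum_abs_le (hq : IsDist q) (y : Fin S → ℝ) :
    |L1dist (fun k => q k * (1 - ∑ k, y k) + y k) q - ∑ k, abs (y k)| ≤ |∑ k, y k| := by
  rw [L1dist, ← Finset.sum_sub_distrib]
  calc _ ≤ ∑ k, q k * |∑ k, y k| := (Finset.abs_sum_le_sum_abs _ _).trans <|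
        Finset.sum_le_sum fun k _ => (abs_abs_sub_abs_le_abs_sub _ _).trans_eq <| by
          rw [show q k * (1 - ∑ k, y k) + y k - q k - y k = q k * -∑ k, y k by ring, abs_mul,
            abs_neg, abs_of_nonneg (hq.1 k)]
    _ = |∑ k, y k| := by rw [← Finset.sum_mul, hq.2, one_mul]

lemma sq_L1dist_perturb_sub_le (hq : IsDist q) {μ : ℝ} (hμ : μ ∈ Set.Icc 0 1) :
    (L1dist (perturb q y) q - μ) ^ 2 ≤ 2 * (∑ k, |y k| - μ) ^ 2 + 16 * (∑ k, y k) ^ 2 := by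
  unfold perturb
  split_ifs with hsum
  · have hdist := sq_le_sq.2 (abs_L1dist_sub_sum_abs_le hq y)
    set D := L1dist (fun k => q k * (1 - ∑ k, y k) + y k) q
    nlinarith [sq_nonneg ((D - ∑ k, |y k|) - (∑ k, |y k| - μ)), sq_nonneg (∑ k, y k)]
  · have hself : L1dist q q = 0 := by simp [L1dist]
    have hlarge : (1 / 4 : ℝ) ^ 2 ≤ (∑ k, y k) ^ 2 :=
      sq_le_sq.2 (by rw [abs_of_pos (by norm_num : (0 : ℝ) < 1 / 4)]; exact (not_le.1 hsum).le)
    rw [hself]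
    nlinarith [sq_nonneg (∑ k, |y k| - μ), hμ.1, hμ.2]

end Perturbation

section CoordinateSwap

variable {ι : Type*} [Fintype ι] {S m n : ℕ} {q y : Fin S → ℝ} {j : Fin S} {q₀ τ V T a : ℝ}
  {w : Bool → ι → ℝ} {u : ι → ℝ}

lemma CoordinatePrior.sum_abs_sub_le (h : CoordinatePrior m n q₀ τ V T w u a) :
    ∑ i, |w true i - w false i| ≤ 2 := by
  calc ∑ i, |w true i - w false i| ≤ ∑ i, (w true i + w false i) :=
        Finset.sum_le_sum fun i _ => abs_sub_le_iff.2
          ⟨by linarith [(h.mem_stdSimplex false).1 i], by linarith [(h.mem_stdSimplex true).1 i]⟩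
    _ = 2 := by
        rw [Finset.sum_add_distrib, (h.mem_stdSimplex true).2, (h.mem_stdSimplex false).2]
        norm_num

lemma CoordinatePrior.tsum_enorm_sum_sub_mul_le (h : CoordinatePrior m n (q j) τ V T w u a)
    (hτ : τ ≤ 1 / 16) (hq : IsDist q) (hy : ∀ k, -(q k / 2) ≤ y k) (hyj : |y j| ≤ τ)
    (hsum : |∑ k, y k| ≤ 1 / 8) :
    ∑' X, ‖∑ i, (w true i - w false i) * prodPMF n (perturb q (Function.update y j (u i))) X‖ₑ
      ≤ ENNReal.ofReal (2 * Real.exp ((3 * T - m) / 2)) := by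
  set r := perturb q (Function.update y j a) with hr
  have hsmall {t : ℝ} (ht : |t| ≤ τ) : |∑ k, Function.update y j t k| ≤ 1 / 4 :=
    abs_sum_update_le hsum (hyj.trans hτ) (ht.trans hτ)
  have hrj : a + 3 * q j / 4 ≤ r j := by
    simpa only [Function.update_self] using add_le_perturb_apply (hq.1 j) (hsmall h.abs_center_le)
  have hrk (k : Fin S) (hk : k ≠ j) : q k / 4 ≤ r k := by
    have := add_le_perturb_apply (hq.1 k) (hsmall h.abs_center_le)
    rw [Function.update_of_ne hk] at this
    linarith [hy k]
  have hr0 (k : Fin S) : 0 ≤ r k := by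
    obtain rfl | hk := eq_or_ne k j
    · exact h.center_pos.le.trans hrj
    · exact (div_nonneg (hq.1 k) zero_le_four).trans (hrk k hk)
  have hsupport (k : Fin S) (hk0 : r k = 0) : Pi.single (M := fun _ => ℝ) j 1 k - q k = 0 := by
    obtain rfl | hk := eq_or_ne k j
    · exact absurd hk0 (h.center_pos.trans_le hrj).ne'
    · rw [Pi.single_eq_of_ne hk]
      linarith [hq.1 k, hrk k hk]
  simp only [fun i => perturb_update (q := q) (hsmall h.abs_center_le) (hsmall (h.abs_le i))]
  refine tsum_enorm_sum_mul_prodPMF_le hr0 hsupport ?_ h.sum_abs_sub_le fun i => ?_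
  · simpa only [one_mul, sub_eq_add_neg] using h.momentsVanish.affine 1 (-a)
  · calc _ ≤ (u i - a) ^ 2 * (n * (1 / (a + 3 * q j / 4) + 4)) := by
          gcongr
          exact sum_single_sub_sq_div_le hq h.center_pos hrj hrk
      _ = n * ((u i - a) ^ 2 * (1 / (a + 3 * q j / 4) + 4)) := by ring
      _ ≤ T := h.exponent_le i

lemma tsum_enorm_sum_mul_prodPMF_le_sum_abs (v : ι → ℝ) {p : ι → Fin S → ℝ}
    (hp : ∀ i k, 0 ≤ p i k) :
    ∑' X, ‖∑ i, v i * prodPMF n (p i) X‖ₑ ≤ ENNReal.ofReal (∑ i, |v i|) := by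
  refine (tsum_enorm_sum_mul_le v fun i => prodPMF n (p i)).trans_eq ?_
  simp only [tsum_enorm_prodPMF (hp _), mul_one]
  simp only [Real.enorm_eq_ofReal_abs]
  exact (ENNReal.ofReal_sum_of_nonneg fun i _ => abs_nonneg _).symm

end CoordinateSwap

section Mixtures

variable {ι : Type*} [Fintype ι] {S n : ℕ} {q : Fin S → ℝ} {u W : Fin S → ι → ℝ}

/-- The law of the Poisson counts when the sampled distribution is the perturbation of `q` whose
coordinates are drawn independently, the `k`-th one equal to `u k i` with weight `W k i`. -/
noncomputable def mixture (n : ℕ) (q : Fin S → ℝ) (u W : Fin S → ι → ℝ) (X : Fin S → ℕ) : ℝ :=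
  ∑ x, prodWeight W x * prodPMF n (perturb q fun k => u k (x k)) X

lemma mixture_update_sub {j : Fin S} (hW : ∑ i, W j i = 1) (v v' : ι → ℝ) (X : Fin S → ℕ) :
    mixture n q u (Function.update W j v) X - mixture n q u (Function.update W j v') X
      = ∑ x, prodWeight W x * ∑ i, (v i - v' i) *
          prodPMF n (perturb q (Function.update (fun k => u k (x k)) j (u j i))) X := by
  have hupdate (x : Fin S → ι) (i : ι) : (fun k => u k (Function.update x j i k))
      = Function.update (fun k => u k (x k)) j (u j i) :=
    funext fun k => Function.apply_update u x j i k
  simp only [mixture, sum_prodWeight_update_mul hW, hupdate, sub_mul, Finset.sum_sub_distrib,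
    mul_sub]

lemma sum_mul_sq_sub_mean_le {w : ι → ℝ} (hw : ∑ i, w i = 1) (f : ι → ℝ) :
    ∑ i, w i * (f i - ∑ i, w i * f i) ^ 2 ≤ ∑ i, w i * f i ^ 2 := by
  set μ := ∑ i, w i * f i with hμ
  calc ∑ i, w i * (f i - μ) ^ 2
      = ∑ i, (w i * f i ^ 2 - 2 * μ * (w i * f i) + μ ^ 2 * w i) :=
        Finset.sum_congr rfl fun i _ => by ring
    _ = ∑ i, w i * f i ^ 2 - μ ^ 2 := by
        rw [Finset.sum_add_distrib, Finset.sum_sub_distrib, ← Finset.mul_sum, ← Finset.mul_sum,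
          hw, ← hμ]
        ring
    _ ≤ ∑ i, w i * f i ^ 2 := sub_le_self _ (sq_nonneg μ)

lemma sum_mul_abs_le_of_neg_le {w f : ι → ℝ} (hw : w ∈ stdSimplex ℝ ι) (hf : ∑ i, w i * f i = 0)
    {t : ℝ} (ht : 0 ≤ t) (hlow : ∀ i, -(t / 2) ≤ f i) : ∑ i, w i * |f i| ≤ t := by
  calc ∑ i, w i * |f i| ≤ ∑ i, w i * (f i + t) := by
        gcongr with i
        · exact hw.1 i
        · exact abs_le.2 ⟨by linarith [hlow i], by linarith⟩
    _ = t := by simp only [mul_add, Finset.sum_add_distrib, hf, ← Finset.sum_mul, hw.2]; ring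

lemma sum_prodWeight_mul_sq_L1dist_perturb_sub_le (hq : IsDist q)
    (hW : ∀ k, W k ∈ stdSimplex ℝ ι) (hmean : ∀ k, ∑ i, W k i * u k i = 0)
    (hlow : ∀ k i, -(q k / 2) ≤ u k i) {V : ℝ} (hV : ∑ k, ∑ i, W k i * u k i ^ 2 ≤ V) :
    ∑ x, prodWeight W x *
        (L1dist (perturb q fun k => u k (x k)) q - ∑ k, ∑ i, W k i * |u k i|) ^ 2 ≤ 18 * V := by
  set ν : Fin S → ℝ := fun k => ∑ i, W k i * |u k i|
  have hν : ∑ k, ν k ∈ Set.Icc (0 : ℝ) 1 := by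
    refine ⟨Finset.sum_nonneg fun k _ => Finset.sum_nonneg fun i _ =>
      mul_nonneg ((hW k).1 i) (abs_nonneg _), hq.2 ▸ Finset.sum_le_sum fun k _ => ?_⟩
    exact sum_mul_abs_le_of_neg_le (hW k) (hmean k) (hq.1 k) (hlow k)
  have hcentered (k : Fin S) : ∑ i, W k i * (|u k i| - ν k) = 0 := by
    simp only [mul_sub, Finset.sum_sub_distrib, ← Finset.sum_mul, (hW k).2, one_mul]
    exact sub_self _
  have hvar : ∑ k, ∑ i, W k i * (|u k i| - ν k) ^ 2 ≤ V := by
    refine (Finset.sum_le_sum fun k _ => ?_).trans hV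
    simpa only [sq_abs] using sum_mul_sq_sub_mean_le (hW k).2 fun i => |u k i|
  calc _ ≤ ∑ x, prodWeight W x *
          (2 * (∑ k, (|u k (x k)| - ν k)) ^ 2 + 16 * (∑ k, u k (x k)) ^ 2) := by
        gcongr with x
        · exact (prodWeight_mem_stdSimplex hW).1 x
        · rw [Finset.sum_sub_distrib]
          exact sq_L1dist_perturb_sub_le hq hν
    _ = 2 * ∑ k, ∑ i, W k i * (|u k i| - ν k) ^ 2 + 16 * ∑ k, ∑ i, W k i * u k i ^ 2 := by
        rw [← sum_prodWeight_mul_sum_sq hW hcentered, ← sum_prodWeight_mul_sum_sq hW hmean]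
        simp only [mul_add, Finset.sum_add_distrib, Finset.mul_sum, mul_left_comm]
    _ ≤ 18 * V := by linarith

end Mixtures

section Hybrid

variable {ι : Type*} [Fintype ι] {S m n : ℕ} {q : Fin S → ℝ} {τ V T : ℝ}
  {w : Fin S → Bool → ι → ℝ} {u : Fin S → ι → ℝ} {a : Fin S → ℝ}

lemma sum_second_moment_le (hq : IsDist q)
    (h : ∀ k, CoordinatePrior m n (q k) τ V T (w k) (u k) (a k)) (b : Fin S → Bool) :
    ∑ k, ∑ i, w k (b k) i * u k i ^ 2 ≤ V := by
  calc ∑ k, ∑ i, w k (b k) i * u k i ^ 2 ≤ ∑ k, V * q k :=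
        Finset.sum_le_sum fun k _ => (h k).second_moment_le (b k)
    _ = V := by rw [← Finset.mul_sum, hq.2, mul_one]

lemma isDist_perturb_priors (hq : IsDist q)
    (h : ∀ k, CoordinatePrior m n (q k) τ V T (w k) (u k) (a k)) (x : Fin S → ι) :
    IsDist (perturb q fun k => u k (x k)) :=
  isDist_perturb hq fun k => (h k).neg_half_le (x k)

lemma tsum_enorm_swap_le (hq : IsDist q)
    (h : ∀ k, CoordinatePrior m n (q k) τ V T (w k) (u k) (a k)) (hτ : τ ≤ 1 / 16)
    (x : Fin S → ι) (j : Fin S) :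
    ∑' X, ‖∑ i, (w j true i - w j false i) *
        prodPMF n (perturb q (Function.update (fun k => u k (x k)) j (u j i))) X‖ₑ
      ≤ ENNReal.ofReal (2 * Real.exp ((3 * T - m) / 2) +
          if 1 / 8 < |∑ k, u k (x k)| then 2 else 0) := by
  split_ifs with hsum
  · have hdist (i : ι) : IsDist (perturb q (Function.update (fun k => u k (x k)) j (u j i))) := by
      rw [← funext fun k => Function.apply_update u x j i k]
      exact isDist_perturb_priors hq h (Function.update x j i)
    refine (tsum_enorm_sum_mul_prodPMF_le_sum_abs _ fun i => (hdist i).1).trans ?_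
    refine ENNReal.ofReal_le_ofReal ?_
    linarith [(h j).sum_abs_sub_le, Real.exp_pos ((3 * T - m) / 2)]
  · rw [add_zero]
    exact (h j).tsum_enorm_sum_sub_mul_le hτ hq (fun k => (h k).neg_half_le (x k))
      ((h j).abs_le (x j)) (not_lt.1 hsum)

lemma sum_prodWeight_large_sum_le (hq : IsDist q)
    (h : ∀ k, CoordinatePrior m n (q k) τ V T (w k) (u k) (a k)) (hτ : 0 < τ) (hV : V ≤ τ ^ 2)
    (b : Fin S → Bool) :
    ∑ x with 1 / 8 < |∑ k, u k (x k)|, prodWeight (fun k => w k (b k)) x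
      ≤ 2 * Real.exp (1 - 1 / (8 * τ)) := by
  refine (sum_prodWeight_lt_abs_le (θ := 1 / τ) (fun k => (h k).mem_stdSimplex (b k))
    (fun k => (h k).mean (b k)) (by positivity) (fun k i => ?_)
    ((sum_second_moment_le hq h b).trans hV)).trans_eq ?_
  · rw [abs_mul, abs_of_pos (by positivity), one_div, inv_mul_le_one₀ hτ]
    exact (h k).abs_le i
  · congr 2
    field_simp

/-- The total variation cost of changing the prior of a single coordinate. -/
noncomputable def swapCost (m : ℕ) (T τ : ℝ) : ℝ :=
  2 * Real.exp ((3 * T - m) / 2) + 4 * Real.exp (1 - 1 / (8 * τ))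

lemma tsum_enorm_mixture_update_sub_le (hq : IsDist q)
    (h : ∀ k, CoordinatePrior m n (q k) τ V T (w k) (u k) (a k)) (hτ : τ ∈ Set.Ioc 0 (1 / 16))
    (hV : V ≤ τ ^ 2) (b : Fin S → Bool) (j : Fin S) :
    ∑' X, ‖mixture n q u (fun k => w k (Function.update b j true k)) X -
        mixture n q u (fun k => w k (Function.update b j false k)) X‖ₑ
      ≤ ENNReal.ofReal (swapCost m T τ) := by
  have hW (k : Fin S) := (h k).mem_stdSimplex (b k)
  have hprod := prodWeight_mem_stdSimplex hW
  have hupdate (c : Bool) : (fun k => w k (Function.update b j c k))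
      = Function.update (fun k => w k (b k)) j (w j c) :=
    funext fun k => Function.apply_update w b j c k
  simp only [hupdate, mixture_update_sub (W := fun k => w k (b k)) (hW j).2]
  refine (tsum_enorm_sum_mul_le _ _).trans <|
    (Finset.sum_le_sum fun x _ => mul_le_mul_right (tsum_enorm_swap_le hq h hτ.2 x j) _).trans ?_
  set η := 2 * Real.exp ((3 * T - m) / 2)
  have hcost (x : Fin S → ι) : 0 ≤ η + if 1 / 8 < |∑ k, u k (x k)| then 2 else 0 := by
    positivity
  simp only [Real.enorm_of_nonneg (hprod.1 _), ← ENNReal.ofReal_mul (hprod.1 _)]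
  rw [← ENNReal.ofReal_sum_of_nonneg fun x _ => mul_nonneg (hprod.1 x) (hcost x)]
  refine ENNReal.ofReal_le_ofReal ?_
  calc _ = η + 2 * ∑ x with 1 / 8 < |∑ k, u k (x k)|, prodWeight (fun k => w k (b k)) x := by
        simp only [mul_add, Finset.sum_add_distrib, ← Finset.sum_mul, hprod.2, one_mul,
          mul_ite, mul_zero]
        rw [← Finset.sum_filter, ← Finset.sum_mul, mul_comm (2 : ℝ)]
    _ ≤ swapCost m T τ := by
        rw [swapCost]
        linarith [sum_prodWeight_large_sum_le hq h hτ.1 hV b]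

lemma tsum_enorm_mixture_sub_le (hq : IsDist q)
    (h : ∀ k, CoordinatePrior m n (q k) τ V T (w k) (u k) (a k)) (hτ : τ ∈ Set.Ioc 0 (1 / 16))
    (hV : V ≤ τ ^ 2) :
    ∑' X, ‖mixture n q u (fun k => w k true) X - mixture n q u (fun k => w k false) X‖ₑ
      ≤ ENNReal.ofReal (S * swapCost m T τ) := by
  have hybrid (s : Finset (Fin S)) :
      ∑' X, ‖mixture n q u (fun k => w k (decide (k ∈ s))) X -
          mixture n q u (fun k => w k false) X‖ₑ ≤ s.card * ENNReal.ofReal (swapCost m T τ) := by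
    induction s using Finset.induction_on with
    | empty => simp
    | insert j s hj ih =>
      have hinsert : (fun k => decide (k ∈ insert j s))
          = Function.update (fun k => decide (k ∈ s)) j true := by
        funext k
        obtain rfl | hk := eq_or_ne k j <;> simp [*]
      have hself : (fun k => decide (k ∈ s))
          = Function.update (fun k => decide (k ∈ s)) j false := by
        rw [Function.eq_update_iff]
        simp [hj]
      have hswap := tsum_enorm_mixture_update_sub_le hq h hτ hV (fun k => decide (k ∈ s)) j
      rw [← hinsert, ← hself] at hswap
      rw [Finset.card_insert_of_notMem hj, Nat.cast_succ, add_mul, one_mul, add_comm]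
      refine le_trans ?_ (add_le_add hswap ih)
      rw [← ENNReal.tsum_add]
      refine ENNReal.tsum_le_tsum fun X => ?_
      simp only [← edist_eq_enorm_sub]
      exact edist_triangle _ _ _
  simpa [ENNReal.ofReal_mul] using hybrid Finset.univ

end Hybrid

section LeCam

lemma sq_half_mul_le_abs_sub_add_sq_errors {D g f₀ f₁ μ₀ μ₁ : ℝ} (hf₀ : 0 ≤ f₀) (hf₁ : 0 ≤ f₁)
    (hD : 0 ≤ D) (hμ : D ≤ μ₁ - μ₀) :
    D ^ 2 / 2 * f₀ ≤ D ^ 2 / 2 * |f₁ - f₀| + (f₁ * (g - μ₁) ^ 2 + f₀ * (g - μ₀) ^ 2) := by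
  have herrors : D ^ 2 / 2 ≤ (g - μ₁) ^ 2 + (g - μ₀) ^ 2 := by
    nlinarith [sq_nonneg ((g - μ₁) + (g - μ₀))]
  have hoverlap : f₀ ≤ |f₁ - f₀| + min f₁ f₀ := by
    linarith [max_sub_min_eq_abs' f₁ f₀, le_max_right f₁ f₀]
  calc D ^ 2 / 2 * f₀ ≤ D ^ 2 / 2 * |f₁ - f₀| + min f₁ f₀ * (D ^ 2 / 2) := by
        nlinarith [sq_nonneg D]
    _ ≤ D ^ 2 / 2 * |f₁ - f₀| + min f₁ f₀ * ((g - μ₁) ^ 2 + (g - μ₀) ^ 2) := by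
        gcongr
    _ ≤ D ^ 2 / 2 * |f₁ - f₀| + (f₁ * (g - μ₁) ^ 2 + f₀ * (g - μ₀) ^ 2) := by
        rw [mul_add]
        gcongr
        · exact min_le_left _ _
        · exact min_le_right _ _

lemma ofReal_sq_le_tsum_add_tsum {α : Type*} {f₀ f₁ : α → ℝ} (hf₀ : ∀ x, 0 ≤ f₀ x)
    (hf₁ : ∀ x, 0 ≤ f₁ x) (hsum : HasSum f₀ 1)
    (htv : ∑' x, ‖f₁ x - f₀ x‖ₑ ≤ ENNReal.ofReal (1 / 2)) {D μ₀ μ₁ : ℝ} (hD : 0 ≤ D)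
    (hμ : D ≤ μ₁ - μ₀) (g : α → ℝ) :
    ENNReal.ofReal (D ^ 2 / 4) ≤ ∑' x, ENNReal.ofReal (f₁ x * (g x - μ₁) ^ 2) +
      ∑' x, ENNReal.ofReal (f₀ x * (g x - μ₀) ^ 2) := by
  have htotal : ∑' x, ENNReal.ofReal (f₀ x) = 1 := by
    rw [← ENNReal.ofReal_tsum_of_nonneg hf₀ hsum.summable, hsum.tsum_eq, ENNReal.ofReal_one]
  have hpoint (x : α) : ENNReal.ofReal (D ^ 2 / 2) * ENNReal.ofReal (f₀ x) ≤
      ENNReal.ofReal (D ^ 2 / 2) * ‖f₁ x - f₀ x‖ₑ +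
        (ENNReal.ofReal (f₁ x * (g x - μ₁) ^ 2) + ENNReal.ofReal (f₀ x * (g x - μ₀) ^ 2)) := by
    have h₁ := mul_nonneg (hf₁ x) (sq_nonneg (g x - μ₁))
    have h₀ := mul_nonneg (hf₀ x) (sq_nonneg (g x - μ₀))
    rw [Real.enorm_eq_ofReal_abs, ← ENNReal.ofReal_mul (by positivity),
      ← ENNReal.ofReal_mul (by positivity), ← ENNReal.ofReal_add h₁ h₀,
      ← ENNReal.ofReal_add (by positivity) (add_nonneg h₁ h₀)]
    exact ENNReal.ofReal_le_ofReal
      (sq_half_mul_le_abs_sub_add_sq_errors (hf₀ x) (hf₁ x) hD hμ)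
  have hmain := ENNReal.tsum_le_tsum hpoint
  rw [ENNReal.tsum_mul_left, htotal, mul_one, ENNReal.tsum_add, ENNReal.tsum_mul_left,
    ENNReal.tsum_add] at hmain
  refine (ENNReal.add_le_add_iff_left (ENNReal.ofReal_ne_top (r := D ^ 2 / 4))).1 ?_
  calc ENNReal.ofReal (D ^ 2 / 4) + ENNReal.ofReal (D ^ 2 / 4) = ENNReal.ofReal (D ^ 2 / 2) := by
        rw [← ENNReal.ofReal_add (by positivity) (by positivity)]
        ring_nf
    _ ≤ _ := hmain
    _ ≤ ENNReal.ofReal (D ^ 2 / 2) * ENNReal.ofReal (1 / 2) + _ := by gcongr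
    _ = ENNReal.ofReal (D ^ 2 / 4) + _ := by
        rw [← ENNReal.ofReal_mul (by positivity), show D ^ 2 / 2 * (1 / 2) = D ^ 2 / 4 by ring]

variable {S n : ℕ} {ι : Type*} [Fintype ι]

lemma risk_le_two_mul_risk_add {p : Fin S → ℝ} (hp : ∀ k, 0 ≤ p k) (t μ : ℝ)
    (est : (Fin S → ℕ) → ℝ) :
    risk n p μ est ≤ 2 * risk n p t est + ENNReal.ofReal (2 * (t - μ) ^ 2) := by
  have hmass : ∑' X, ENNReal.ofReal (prodPMF n p X) = 1 := by
    rw [← tsum_enorm_prodPMF (n := n) hp]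
    exact tsum_congr fun X => (Real.enorm_of_nonneg (prodPMF_nonneg hp X)).symm
  calc risk n p μ est ≤ ∑' X, (2 * ENNReal.ofReal (prodPMF n p X * (est X - t) ^ 2) +
          ENNReal.ofReal (2 * (t - μ) ^ 2) * ENNReal.ofReal (prodPMF n p X)) := by
        refine ENNReal.tsum_le_tsum fun X => ?_
        have hX : 0 ≤ prodPMF n p X := prodPMF_nonneg hp X
        rw [← ENNReal.ofReal_ofNat, ← ENNReal.ofReal_mul two_pos.le,
          ← ENNReal.ofReal_mul (by positivity),
          ← ENNReal.ofReal_add (by positivity) (by positivity)]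
        refine ENNReal.ofReal_le_ofReal ?_
        nlinarith [mul_nonneg hX (sq_nonneg ((est X - t) - (t - μ)))]
    _ = 2 * risk n p t est + ENNReal.ofReal (2 * (t - μ) ^ 2) := by
        rw [ENNReal.tsum_add, ENNReal.tsum_mul_left, ENNReal.tsum_mul_left, hmass, mul_one, risk]

lemma tsum_ofReal_sum_mul_prodPMF_mul_sq {c : ι → ℝ} {p : ι → Fin S → ℝ} (hc : ∀ i, 0 ≤ c i)
    (hp : ∀ i k, 0 ≤ p i k) (μ : ℝ) (est : (Fin S → ℕ) → ℝ) :
    ∑' X, ENNReal.ofReal ((∑ i, c i * prodPMF n (p i) X) * (est X - μ) ^ 2)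
      = ∑ i, ENNReal.ofReal (c i) * risk n (p i) μ est := by
  simp only [risk, ← ENNReal.tsum_mul_left]
  rw [← Summable.tsum_finsetSum fun i _ => ENNReal.summable]
  refine tsum_congr fun X => ?_
  have hterm (i : ι) : 0 ≤ c i * (prodPMF n (p i) X * (est X - μ) ^ 2) :=
    mul_nonneg (hc i) (mul_nonneg (prodPMF_nonneg (hp i) X) (sq_nonneg _))
  simp only [← ENNReal.ofReal_mul (hc _)]
  rw [← ENNReal.ofReal_sum_of_nonneg fun i _ => hterm i, Finset.sum_mul]
  simp only [mul_assoc]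

lemma tsum_ofReal_sum_mul_prodPMF_mul_sq_le {c : ι → ℝ} (hc : c ∈ stdSimplex ℝ ι)
    {p : ι → Fin S → ℝ} (hp : ∀ i k, 0 ≤ p i k) {t : ι → ℝ} {est : (Fin S → ℕ) → ℝ} {R : ℝ≥0∞}
    (hR : ∀ i, risk n (p i) (t i) est ≤ R) {μ v : ℝ} (hv : ∑ i, c i * (t i - μ) ^ 2 ≤ v) :
    ∑' X, ENNReal.ofReal ((∑ i, c i * prodPMF n (p i) X) * (est X - μ) ^ 2)
      ≤ 2 * R + ENNReal.ofReal (2 * v) := by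
  rw [tsum_ofReal_sum_mul_prodPMF_mul_sq hc.1 hp]
  calc ∑ i, ENNReal.ofReal (c i) * risk n (p i) μ est
      ≤ ∑ i, ENNReal.ofReal (c i) * (2 * R + ENNReal.ofReal (2 * (t i - μ) ^ 2)) := by
        gcongr with i
        refine (risk_le_two_mul_risk_add (hp i) (t i) μ est).trans ?_
        gcongr
        exact hR i
    _ = 2 * R + ENNReal.ofReal (2 * ∑ i, c i * (t i - μ) ^ 2) := by
        have hterm (i : ι) : 0 ≤ c i * (2 * (t i - μ) ^ 2) :=
          mul_nonneg (hc.1 i) (by positivity)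
        simp only [mul_add, Finset.sum_add_distrib, ← Finset.sum_mul,
          ← ENNReal.ofReal_mul (hc.1 _)]
        rw [← ENNReal.ofReal_sum_of_nonneg fun i _ => hc.1 i, hc.2, ENNReal.ofReal_one, one_mul,
          ← ENNReal.ofReal_sum_of_nonneg fun i _ => hterm i, Finset.mul_sum]
        simp only [mul_left_comm]
    _ ≤ 2 * R + ENNReal.ofReal (2 * v) := by gcongr

lemma ofReal_sq_le_of_risk_le {c : Bool → ι → ℝ} (hc : ∀ b, c b ∈ stdSimplex ℝ ι)
    {p : ι → Fin S → ℝ} (hp : ∀ i k, 0 ≤ p i k) {t : ι → ℝ} {est : (Fin S → ℕ) → ℝ} {R : ℝ≥0∞}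
    (hR : ∀ i, risk n (p i) (t i) est ≤ R) {μ : Bool → ℝ} {D : ℝ} (hD : 0 ≤ D)
    (hμ : D ≤ μ true - μ false) (hv : ∀ b, ∑ i, c b i * (t i - μ b) ^ 2 ≤ D ^ 2 / 32)
    (htv : ∑' X, ‖∑ i, c true i * prodPMF n (p i) X - ∑ i, c false i * prodPMF n (p i) X‖ₑ
      ≤ ENNReal.ofReal (1 / 2)) :
    ENNReal.ofReal (D ^ 2 / 32) ≤ R := by
  have hnonneg (b : Bool) (X : Fin S → ℕ) : 0 ≤ ∑ i, c b i * prodPMF n (p i) X :=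
    Finset.sum_nonneg fun i _ => mul_nonneg ((hc b).1 i) (prodPMF_nonneg (hp i) X)
  have hsum : HasSum (fun X => ∑ i, c false i * prodPMF n (p i) X) 1 := by
    simpa only [mul_one, (hc false).2] using
      hasSum_sum fun i (_ : i ∈ Finset.univ) => (hasSum_prodPMF n (p i)).mul_left (c false i)
  have herror (b : Bool) := tsum_ofReal_sum_mul_prodPMF_mul_sq_le (hc b) hp hR (hv b)
  have hlower := (ofReal_sq_le_tsum_add_tsum (hnonneg false) (hnonneg true) hsum htv hD hμ
    est).trans (add_le_add (herror true) (herror false))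
  have hquarter : ENNReal.ofReal (D ^ 2 / 4)
      = 4 * ENNReal.ofReal (D ^ 2 / 32) + 2 * ENNReal.ofReal (2 * (D ^ 2 / 32)) := by
    rw [← ENNReal.ofReal_ofNat 4, ← ENNReal.ofReal_ofNat 2, ← ENNReal.ofReal_mul (by positivity),
      ← ENNReal.ofReal_mul (by positivity), ← ENNReal.ofReal_add (by positivity) (by positivity)]
    ring_nf
  have hscaled : 4 * ENNReal.ofReal (D ^ 2 / 32) + 2 * ENNReal.ofReal (2 * (D ^ 2 / 32))
      ≤ 4 * R + 2 * ENNReal.ofReal (2 * (D ^ 2 / 32)) :=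
    hquarter.symm.trans_le <| hlower.trans_eq <| by ring
  rw [ENNReal.add_le_add_iff_right (by finiteness)] at hscaled
  exact (ENNReal.mul_le_mul_iff_right (by norm_num) (by norm_num)).1 hscaled

end LeCam

section TwoPriors

variable {ι : Type*} [Fintype ι] {S m n : ℕ} {q : Fin S → ℝ} {τ V T : ℝ}
  {w : Fin S → Bool → ι → ℝ} {u : Fin S → ι → ℝ} {a : Fin S → ℝ}

lemma ofReal_sq_le_iSup_risk (hq : IsDist q)
    (h : ∀ k, CoordinatePrior m n (q k) τ V T (w k) (u k) (a k)) (hτ : τ ∈ Set.Ioc 0 (1 / 16))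
    (hV : V ≤ τ ^ 2) (hcost : S * swapCost m T τ ≤ 1 / 2) {D : ℝ} (hD : 0 ≤ D)
    (hgap : D ≤ ∑ k, ∑ i, (w k true i - w k false i) * |u k i|) (hVD : 18 * V ≤ D ^ 2 / 32)
    (est : (Fin S → ℕ) → ℝ) :
    ENNReal.ofReal (D ^ 2 / 32) ≤
      ⨆ p : {p : Fin S → ℝ // IsDist p}, risk n p.1 (L1dist p.1 q) est := by
  have hdist := isDist_perturb_priors hq h
  refine ofReal_sq_le_of_risk_le (c := fun b => prodWeight fun k => w k b)
    (p := fun x => perturb q fun k => u k (x k)) (μ := fun b => ∑ k, ∑ i, w k b i * |u k i|)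
    (t := fun x => L1dist (perturb q fun k => u k (x k)) q)
    (fun b => prodWeight_mem_stdSimplex fun k => (h k).mem_stdSimplex b) (fun x => (hdist x).1)
    (fun x => le_iSup (fun p : {p : Fin S → ℝ // IsDist p} => risk n p.1 (L1dist p.1 q) est)
      ⟨_, hdist x⟩) hD ?_ (fun b => ?_) ?_
  · simpa only [sub_mul, Finset.sum_sub_distrib] using hgap
  · exact (sum_prodWeight_mul_sq_L1dist_perturb_sub_le hq (fun k => (h k).mem_stdSimplex b)
      (fun k => (h k).mean b) (fun k => (h k).neg_half_le)
      (sum_second_moment_le hq h fun _ => b)).trans hVD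
  · exact (tsum_enorm_mixture_sub_le hq h hτ hV).trans (ENNReal.ofReal_le_ofReal hcost)

lemma ofReal_sq_le_iSup_risk_of_le_sum_coordinateGap (hq : IsDist q) (hm : Odd m) {δ : ℝ}
    (hδ : 0 < δ) (hτ : 180 * √δ ≤ 1 / 16)
    (hcost : S * swapCost m (360 * (n * δ)) (180 * √δ) ≤ 1 / 2) {D : ℝ}
    (hδD : 400 * √δ ≤ D) (hD : D ≤ ∑ k, coordinateGap m (q k) δ) (est : (Fin S → ℕ) → ℝ) :
    ENNReal.ofReal (D ^ 2 / 32) ≤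
      ⨆ p : {p : Fin S → ℝ // IsDist p}, risk n p.1 (L1dist p.1 q) est := by
  choose w u a hprior hgap using fun k =>
    exists_coordinatePrior hm n.cast_nonneg hδ (by linarith) ⟨hq.1 k, hq.apply_le_one k⟩
  refine ofReal_sq_le_iSup_risk hq hprior ⟨by positivity, hτ⟩ ?_ hcost
    (hδD.trans' (by positivity)) (hD.trans (Finset.sum_le_sum fun k _ => hgap k)) ?_ est
  · rw [mul_pow, Real.sq_sqrt hδ.le]
    linarith
  · have hsq := pow_le_pow_left₀ (by positivity) hδD 2
    rw [mul_pow, Real.sq_sqrt hδ.le] at hsq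
    linarith

end TwoPriors

section Parameters

open Filter Real

lemma eventually_log_ge_and_mul_log_mul_sqrt_le (K : ℝ) :
    ∀ᶠ n : ℕ in atTop, 3 ≤ log n ∧ K * (log n * √(log n / n)) ≤ 1 := by
  have hlog : ∀ᶠ n : ℕ in atTop, 3 ≤ log n :=
    (tendsto_log_atTop.comp tendsto_natCast_atTop_atTop).eventually_ge_atTop 3
  have hlim : Tendsto (fun n : ℕ => K * √(log n ^ 3 / n)) atTop (nhds (K * √0)) :=
    ((isLittleO_pow_log_id_atTop.tendsto_div_nhds_zero.comp
      tendsto_natCast_atTop_atTop).sqrt).const_mul K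
  rw [sqrt_zero, mul_zero] at hlim
  filter_upwards [hlog, hlim.eventually_le_const zero_lt_one] with n hn hle
  refine ⟨hn, ?_⟩
  rwa [show log n ^ 3 / n = log n ^ 2 * (log n / n) by ring, sqrt_mul (sq_nonneg _),
    sqrt_sq (by linarith)] at hle

lemma exists_odd_mem_Icc {K L : ℝ} (hK : 0 ≤ K) (hL : 1 ≤ L) :
    ∃ m : ℕ, Odd m ∧ (m : ℝ) ∈ Set.Icc (K * L) ((K + 3) * L) := by
  have hceil := Nat.ceil_lt_add_one (a := K * L / 2) (by positivity)
  refine ⟨2 * ⌈K * L / 2⌉₊ + 1, odd_two_mul_add_one _, ?_, ?_⟩ <;> push_cast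
  · linarith [Nat.le_ceil (K * L / 2)]
  · linarith

lemma le_exp_abs_mul_log {x s A : ℝ} (hx : 1 ≤ x) (hs : s ≤ x ^ A) : s ≤ exp (|A| * log x) := by
  refine hs.trans ?_
  rw [rpow_def_of_pos (by linarith), mul_comm]
  have := log_nonneg hx
  gcongr
  exact le_abs_self A

lemma mul_swapCost_le_half {A L T s τ : ℝ} {m : ℕ} (hL : 3 ≤ L) (hs : s ≤ exp (A * L))
    (hm : 3 * T + (2 * A + 6) * L ≤ m) (hτ : 0 < τ)
    (hτL : (A + 16) * L * (8 * τ) ≤ 1) : s * swapCost m T τ ≤ 1 / 2 := by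
  have hsmall (x : ℝ) (hx : 0 ≤ x) : exp (-x) ≤ 1 / (x + 1) := by
    rw [exp_neg, ← one_div]
    exact one_div_le_one_div_of_le (by linarith) (add_one_le_exp x)
  have hmoments : exp (A * L) * exp ((3 * T - m) / 2) ≤ 1 / 8 := by
    rw [← exp_add]
    calc _ ≤ exp (-7) := exp_le_exp.2 (by linarith)
      _ ≤ 1 / 8 := (hsmall 7 (by norm_num)).trans_eq (by norm_num)
  have htail : exp (A * L) * exp (1 - 1 / (8 * τ)) ≤ 1 / 16 := by
    have hinv : (A + 16) * L ≤ 1 / (8 * τ) := (le_div_iff₀ (by positivity)).2 hτL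
    rw [← exp_add]
    calc _ ≤ exp (-15) := exp_le_exp.2 (by linarith)
      _ ≤ 1 / 16 := (hsmall 15 (by norm_num)).trans_eq (by norm_num)
  calc s * swapCost m T τ ≤ exp (A * L) * swapCost m T τ := by
        gcongr
        unfold swapCost
        positivity
    _ = 2 * (exp (A * L) * exp ((3 * T - m) / 2)) + 4 * (exp (A * L) * exp (1 - 1 / (8 * τ))) := by
        unfold swapCost
        ring
    _ ≤ 1 / 2 := by linarith

lemma mul_min_le_coordinateGap {n L κ q : ℝ} {m : ℕ} (hm : 0 < m) (hL : 0 < L) (hκ : 1 ≤ κ)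
    (hmκ : m ≤ κ * L) (hq : 0 ≤ q) :
    1 / (2 * 10 ^ 8 * κ) * min q √(q / (n * L)) ≤ coordinateGap m q (L / n) := by
  have hangle : 1 / κ * (1 / L) ≤ nodeAngle m := by
    have : (0 : ℝ) < m := Nat.cast_pos.2 hm
    calc 1 / κ * (1 / L) = 2 / (2 * (κ * L)) := by field_simp
      _ ≤ nodeAngle m := div_le_div₀ pi_pos.le two_le_pi (by positivity) (by gcongr)
  have hsqrt : √(q / (n * L)) = 1 / L * √(q * (L / n)) := by
    rw [show q / (n * L) = (1 / L) ^ 2 * (q * (L / n)) by field_simp,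
      sqrt_mul (sq_nonneg _), sqrt_sq (by positivity)]
  calc 1 / (2 * 10 ^ 8 * κ) * min q √(q / (n * L))
      = 1 / (2 * 10 ^ 8) * min (1 / κ * q) (1 / κ * (1 / L) * √(q * (L / n))) := by
        rw [hsqrt, mul_assoc (1 / κ), ← mul_min_of_nonneg _ _ (by positivity)]
        ring
    _ ≤ coordinateGap m q (L / n) := by
        unfold coordinateGap
        gcongr
        exact mul_le_of_le_one_left hq ((div_le_one₀ (by linarith)).2 hκ)

end Parameters

theorem minimax_lower_bound_knownQ_general (A : ℝ) :
    ∃ c C : ℝ, ∃ N₀ : ℕ, 0 < c ∧ 0 < C ∧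
      ∀ S n : ℕ, N₀ ≤ n → (S : ℝ) ≤ (n : ℝ) ^ A →
        ∀ q : Fin S → ℝ, IsDist q →
          C * √(Real.log n / n) ≤ ∑ j, min (q j) √(q j / (n * Real.log n)) →
          ∀ est : (Fin S → ℕ) → ℝ,
            ENNReal.ofReal (c * (∑ j, min (q j) √(q j / (n * Real.log n))) ^ 2) ≤
              ⨆ p : {p : Fin S → ℝ // IsDist p}, risk n p.1 (L1dist p.1 q) est := by
  set κ := 1089 + 2 * |A|
  set c₁ := 1 / (2 * 10 ^ 8 * κ)
  obtain ⟨N₀, hN₀⟩ := Filter.eventually_atTop.1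
    (eventually_log_ge_and_mul_log_mul_sqrt_le (8 * 180 * (|A| + 16)))
  refine ⟨c₁ ^ 2 / 32, 400 / c₁, N₀, by positivity, by positivity, fun S n hn hS q hq hB est => ?_⟩
  obtain ⟨hL, hsmall⟩ := hN₀ n hn
  have hn₁ : 1 ≤ n := Nat.one_le_iff_ne_zero.2 <| by rintro rfl; norm_num at hL
  have hSL := le_exp_abs_mul_log (Nat.one_le_cast.2 hn₁) hS
  set L := Real.log n
  set δ := L / n with hδ
  obtain ⟨m, hodd, hmL, hmκ⟩ := exists_odd_mem_Icc (L := L)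
    (show 0 ≤ 1086 + 2 * |A| by positivity) (by linarith)
  have hτ : 180 * √δ ≤ 1 / 16 := by
    have hAL : 16 * 3 ≤ (|A| + 16) * L :=
      mul_le_mul (le_add_of_nonneg_left (abs_nonneg A)) hL (by norm_num) (by positivity)
    linarith [mul_le_mul_of_nonneg_right hAL (Real.sqrt_nonneg δ)]
  have hcost : S * swapCost m (360 * (n * δ)) (180 * √δ) ≤ 1 / 2 :=
    mul_swapCost_le_half hL hSL (by rw [hδ, mul_div_cancel₀ _ (by positivity)]; linarith)
      (by positivity) (by linarith)
  rw [div_mul_eq_mul_div, div_le_iff₀' (by positivity)] at hB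
  rw [div_mul_eq_mul_div, ← mul_pow]
  refine ofReal_sq_le_iSup_risk_of_le_sum_coordinateGap hq hodd (by positivity) hτ hcost hB ?_ est
  rw [Finset.mul_sum]
  exact Finset.sum_le_sum fun k _ => mul_min_le_coordinateGap hodd.pos (by linarith)
    (by linarith [abs_nonneg A]) (by linarith) (hq.1 k)

/-- minimax lower bound for estimating `L₁(P,Q)` with `Q` known. -/
theorem minimax_lower_bound_knownQ (A : ℝ) (hA : 1 ≤ A) :
    ∃ c C : ℝ, ∃ N₀ : ℕ, 0 < c ∧ 0 < C ∧
      ∀ S n : ℕ, 2 ≤ S → N₀ ≤ n → (S : ℝ) ≤ (n : ℝ) ^ A →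
        ∀ q : Fin S → ℝ, IsDist q →
          C * (Real.sqrt (Real.log n / n) + Real.sqrt S * Real.log n / n) ≤
            ∑ j, min (q j) (Real.sqrt (q j / (n * Real.log n))) →
          ∀ est : (Fin S → ℕ) → ℝ,
            ENNReal.ofReal (c * (∑ j, min (q j) (Real.sqrt (q j / (n * Real.log n)))) ^ 2) ≤
              ⨆ p : {p : Fin S → ℝ // IsDist p}, risk n p.1 (L1dist p.1 q) est := by
  obtain ⟨c, C, N₀, hc, hC, hbound⟩ := minimax_lower_bound_knownQ_general A
  exact ⟨c, C, N₀, hc, hC, fun S n _ hn hS q hq hB => hbound S n hn hS q hq <|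
    (mul_le_mul_of_nonneg_left (le_add_of_nonneg_right (by positivity)) hC.le).trans hB⟩
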